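/- arXiv:2011.13977 — 2 statements merged into one kernel-verified Lean document; each statement's English description precedes it below -/
import Mathlib

section
/- Let X be one of the properties: Pareto optimal, rank-maximal, max-cardinality rank-maximal, fair. There exist a constant c > 0 and n_0 such that for every n ≥ n_0 the following holds: for every family, indexed by instances I with n agents and n objects, of pairs (T_I, f_I) — where T_I assigns to each pair (a_i, h_j) a threshold T_I(a_i, h_j) ∈ [0,1] and f_I maps {0,1}-valued n×n answer matrices to matchings of G_I — such that f_I(b_v) satisfies X for every instance I and every unit-range valuation profile v consistent with I (where b_v(i,j) = 1 iff v_i(h_j) ≥ T_I(a_i, h_j)), there exist an instance I with n agents and n objects and a unit-range valuation profile v consistent with I such that max{SW(μ' | v) : μ' a matching of G_I satisfying X} ≥ c·√n·SW(f_I(b_v) | v). -/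
open Finset
open scoped Classical

/-- A one-sided matching instance with `n` agents and `n` objects.  Agent `i` has a
nonempty acceptable set `accept i` and a weak order `pref i` on it
(`pref i h h'` means agent `i` weakly prefers object `h` to object `h'`). -/
structure OSMInstance (n : ℕ) where
  accept : Fin n → Finset (Fin n)
  accept_nonempty : ∀ i, (accept i).Nonempty
  pref : Fin n → Fin n → Fin n → Prop
  pref_refl : ∀ i h, h ∈ accept i → pref i h h
  pref_trans : ∀ i h₁ h₂ h₃, h₁ ∈ accept i → h₂ ∈ accept i → h₃ ∈ accept i →
    pref i h₁ h₂ → pref i h₂ h₃ → pref i h₁ h₃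
  pref_total : ∀ i h₁ h₂, h₁ ∈ accept i → h₂ ∈ accept i → pref i h₁ h₂ ∨ pref i h₂ h₁

namespace OSMInstance

variable {n : ℕ}

/-- Agent `i` strictly prefers object `h` to object `h'`. -/
def strictPref (I : OSMInstance n) (i h h' : Fin n) : Prop :=
  I.pref i h h' ∧ ¬ I.pref i h' h

/-- The rank of the edge `(i, h)` of `G_I`: one plus the number of acceptable objects
that agent `i` strictly prefers to `h`. -/
noncomputable def edgeRank (I : OSMInstance n) (e : Fin n × Fin n) : ℕ :=
  ((I.accept e.1).filter (fun h' => I.strictPref e.1 h' e.2)).card + 1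

/-- A matching of `G_I`: a set of acceptable (agent, object) pairs in which every agent
and every object occurs at most once. -/
def IsMatching (I : OSMInstance n) (μ : Finset (Fin n × Fin n)) : Prop :=
  (∀ e ∈ μ, e.2 ∈ I.accept e.1) ∧
  (∀ e ∈ μ, ∀ e' ∈ μ, e.1 = e'.1 → e = e') ∧
  (∀ e ∈ μ, ∀ e' ∈ μ, e.2 = e'.2 → e = e')

/-- Total weight of a set of edges under the edge weights `w`. -/
def weightSum (w : Fin n × Fin n → ℝ) (μ : Finset (Fin n × Fin n)) : ℝ :=
  ∑ e ∈ μ, w e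

/-- Social welfare of the set of edges `μ` under the valuation profile `v`. -/
def SW (_I : OSMInstance n) (v : Fin n → Fin n → ℝ) (μ : Finset (Fin n × Fin n)) : ℝ :=
  ∑ e ∈ μ, v e.1 e.2

/-- `μ` is a maximum-weight matching of `G_I` with respect to edge weights `w`. -/
def IsMaxWeightMatching (I : OSMInstance n) (w : Fin n × Fin n → ℝ)
    (μ : Finset (Fin n × Fin n)) : Prop :=
  I.IsMatching μ ∧ ∀ μ', I.IsMatching μ' → weightSum w μ' ≤ weightSum w μ

/-- `μ` is a priority-`p` matching: a maximum-weight matching when every rank-`r` edge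
gets weight `p r`. -/
noncomputable def IsPriorityMatching (I : OSMInstance n) (p : ℕ → ℝ)
    (μ : Finset (Fin n × Fin n)) : Prop :=
  I.IsMaxWeightMatching (fun e => p (I.edgeRank e)) μ

/-- `v` is a valuation profile consistent with the instance: values lie in `[0,1]`,
unacceptable objects have value `0`, and on acceptable objects the values represent
the weak order. -/
def Consistent (I : OSMInstance n) (v : Fin n → Fin n → ℝ) : Prop :=
  (∀ i h, 0 ≤ v i h ∧ v i h ≤ 1) ∧
  (∀ i h, h ∉ I.accept i → v i h = 0) ∧
  (∀ i h h', h ∈ I.accept i → h' ∈ I.accept i → (I.pref i h h' ↔ v i h' ≤ v i h))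

/-- Unit-sum valuations: each agent's values over acceptable objects sum to `1`. -/
def UnitSum (I : OSMInstance n) (v : Fin n → Fin n → ℝ) : Prop :=
  ∀ i, ∑ h ∈ I.accept i, v i h = 1

/-- Unit-range valuations: each agent values some acceptable object `1`, some
acceptable object `0`, and has two non-equivalent acceptable objects. -/
def UnitRange (I : OSMInstance n) (v : Fin n → Fin n → ℝ) : Prop :=
  ∀ i, (∃ h ∈ I.accept i, v i h = 1) ∧ (∃ h ∈ I.accept i, v i h = 0) ∧
    ∃ h ∈ I.accept i, ∃ h' ∈ I.accept i, I.strictPref i h h'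

/-- Agent `i` is unmatched in `μ`. -/
def Unmatched (_I : OSMInstance n) (μ : Finset (Fin n × Fin n)) (i : Fin n) : Prop :=
  ∀ h, (i, h) ∉ μ

/-- Agent `i` weakly prefers their allocation in `μ'` to their allocation in `μ`
(being unmatched is strictly worse than receiving any acceptable object). -/
def WeakImprove (I : OSMInstance n) (μ' μ : Finset (Fin n × Fin n)) (i : Fin n) : Prop :=
  I.Unmatched μ i ∨ ∃ h h', (i, h) ∈ μ ∧ (i, h') ∈ μ' ∧ I.pref i h' h

/-- Agent `i` strictly prefers their allocation in `μ'` to their allocation in `μ`. -/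
def StrictImprove (I : OSMInstance n) (μ' μ : Finset (Fin n × Fin n)) (i : Fin n) : Prop :=
  (I.Unmatched μ i ∧ ∃ h', (i, h') ∈ μ') ∨
    ∃ h h', (i, h) ∈ μ ∧ (i, h') ∈ μ' ∧ I.strictPref i h' h

/-- `μ` is a Pareto optimal matching of `G_I`. -/
def ParetoOptimal (I : OSMInstance n) (μ : Finset (Fin n × Fin n)) : Prop :=
  I.IsMatching μ ∧
    ¬ ∃ μ', I.IsMatching μ' ∧ (∀ i, I.WeakImprove μ' μ i) ∧ ∃ i, I.StrictImprove μ' μ i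

/-- `sig I μ r` is the number of rank-`r` edges of `μ` (as an integer). -/
noncomputable def sig (I : OSMInstance n) (μ : Finset (Fin n × Fin n)) (r : ℕ) : ℤ :=
  ((μ.filter (fun e => I.edgeRank e = r)).card : ℤ)

end OSMInstance

/-- Lexicographic comparison `f ≤ g` of the length-`len` tuples `(f 0, …, f (len-1))`
and `(g 0, …, g (len-1))`. -/
def LexLe (len : ℕ) (f g : ℕ → ℤ) : Prop :=
  (∀ j < len, f j = g j) ∨ ∃ j < len, (∀ i < j, f i = g i) ∧ f j < g j

namespace OSMInstance

variable {n : ℕ}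

/-- `μ` is a rank-maximal matching: it lexicographically maximizes `(s_1, …, s_n)`. -/
noncomputable def RankMaximal (I : OSMInstance n) (μ : Finset (Fin n × Fin n)) : Prop :=
  I.IsMatching μ ∧ ∀ μ', I.IsMatching μ' →
    LexLe n (fun j => I.sig μ' (j + 1)) (fun j => I.sig μ (j + 1))

/-- `μ` is a max-cardinality rank-maximal matching: it lexicographically maximizes
`(Σ_i s_i, s_1, …, s_n)`. -/
noncomputable def MaxCardRankMaximal (I : OSMInstance n) (μ : Finset (Fin n × Fin n)) : Prop :=
  I.IsMatching μ ∧ ∀ μ', I.IsMatching μ' →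
    LexLe (n + 1) (fun j => if j = 0 then (μ'.card : ℤ) else I.sig μ' j)
      (fun j => if j = 0 then (μ.card : ℤ) else I.sig μ j)

/-- `μ` is a fair matching: it lexicographically maximizes
`(Σ_i s_i, -s_n, -s_(n-1), …, -s_1)`. -/
noncomputable def FairMatching (I : OSMInstance n) (μ : Finset (Fin n × Fin n)) : Prop :=
  I.IsMatching μ ∧ ∀ μ', I.IsMatching μ' →
    LexLe (n + 1) (fun j => if j = 0 then (μ'.card : ℤ) else -I.sig μ' (n + 1 - j))
      (fun j => if j = 0 then (μ.card : ℤ) else -I.sig μ (n + 1 - j))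

end OSMInstance

/-- The priority vector for rank-maximal matchings: a rank-`r` edge gets weight
`n ^ (2 * (n - r + 1))`. -/
noncomputable def pRankMaximal (n : ℕ) : ℕ → ℝ :=
  fun r => (n : ℝ) ^ (2 * (n - r + 1))

/-- The priority vector for max-cardinality rank-maximal matchings: a rank-`r` edge gets
weight `n ^ (2 * n) + n ^ (2 * (n - r))`. -/
noncomputable def pMaxCardRankMaximal (n : ℕ) : ℕ → ℝ :=
  fun r => (n : ℝ) ^ (2 * n) + (n : ℝ) ^ (2 * (n - r))

/-- The priority vector for fair matchings: a rank-`r` edge gets weight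
`4 * n ^ (2 * n) - 2 * n ^ (r - 1)`. -/
noncomputable def pFairVec (n : ℕ) : ℕ → ℝ :=
  fun r => 4 * (n : ℝ) ^ (2 * n) - 2 * (n : ℝ) ^ (r - 1)

/-- The set `𝕡` of the three priority vectors of interest. -/
noncomputable def PrioritySet (n : ℕ) : Set (ℕ → ℝ) :=
  {pRankMaximal n, pMaxCardRankMaximal n, pFairVec n}

/-- The four matching properties considered: Pareto optimal, rank-maximal,
max-cardinality rank-maximal, and fair. -/
inductive MatchProp where
  | po | rm | mcrm | fair

/-- `μ` satisfies the property `X` with respect to the instance `I`. -/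
noncomputable def SatisfiesProp {n : ℕ} (X : MatchProp) (I : OSMInstance n)
    (μ : Finset (Fin n × Fin n)) : Prop :=
  match X with
  | .po => I.ParetoOptimal μ
  | .rm => I.RankMaximal μ
  | .mcrm => I.MaxCardRankMaximal μ
  | .fair => I.FairMatching μ

/-!
Every agent accepts three objects: a common favourite, a common worst object, and the middle object
of her block, each block having at least three agents. Ranks and preferences are then functions of
the object alone, so every matching that uses all acceptable objects has all four properties.

Fix `s = 1 / √n`. In every block, two of the agents have their thresholds for the middle object on
the same side of `s`. If these thresholds are at most `s`, neither agent's answer separates the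
values `s` and `1 / 2`; otherwise neither answer separates `s²` and `s`. Give the lower value to the
whole block. The algorithm's matching withholds the middle object from one of the two agents, and
raising her value to the higher one leaves all answers, hence the matching, unchanged. The algorithm
thus collects at most the lower value from every block, plus `1` for the favourite, while another
matching with all four properties collects the higher value from every block. As there are of order
`n` blocks and every higher value is at least `s`, that matching has welfare of order `√n`, which
absorbs the extra `1`.
-/

theorem LexLe.of_forall_le {len : ℕ} {f g : ℕ → ℤ} (h : ∀ j < len, f j ≤ g j) :
    LexLe len f g := by
  by_cases hne : ∃ j, j < len ∧ f j ≠ g j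
  · obtain ⟨hlt, hfg⟩ := Nat.find_spec hne
    refine .inr ⟨Nat.find hne, hlt, fun i hi => ?_, (h _ hlt).lt_of_ne hfg⟩
    by_contra hfg'
    exact Nat.find_min hne hi ⟨hi.trans hlt, hfg'⟩
  · exact .inl fun j hj => by_contra fun hfg => hne ⟨j, hj, hfg⟩

theorem exists_one_lt_card_filter_le_iff_le {ι : Type*} {B : Finset ι} (hB : 2 < #B) (τ : ι → ℝ)
    {s : ℝ} (hs : 0 < s) (hs' : s ≤ 1 / 2) :
    ∃ lo hi : ℝ, 0 < lo ∧ lo ≤ 2 * s * hi ∧ s ≤ hi ∧ hi < 1 ∧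
      1 < #(B.filter fun i => τ i ≤ lo ↔ τ i ≤ hi) := by
  have hsplit := card_filter_add_card_filter_not (s := B) (fun i => τ i ≤ s)
  by_cases hlow : 1 < #(B.filter fun i => τ i ≤ s)
  · refine ⟨s, 1 / 2, hs, by linarith, hs', by norm_num, hlow.trans_le (card_le_card ?_)⟩
    exact monotone_filter_right B fun i _ hi => ⟨fun _ => hi.trans hs', fun _ => hi⟩
  · have hhigh : 1 < #(B.filter fun i => ¬ τ i ≤ s) := by omega
    refine ⟨s ^ 2, s, by positivity, by nlinarith, le_rfl, by linarith,
      hhigh.trans_le (card_le_card ?_)⟩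
    have hsq : s ^ 2 ≤ s := by nlinarith
    exact monotone_filter_right B fun i _ hi =>
      ⟨fun h => absurd (h.trans hsq) hi, fun h => absurd h hi⟩

theorem SatisfiesProp.isMatching {n : ℕ} {X : MatchProp} {I : OSMInstance n}
    {μ : Finset (Fin n × Fin n)} (h : SatisfiesProp X I μ) : I.IsMatching μ := by
  cases X <;> exact h.1

namespace OSMInstance

variable {n : ℕ} {I : OSMInstance n} {μ ν : Finset (Fin n × Fin n)}

theorem IsMatching.filter_fst_eq (hμ : I.IsMatching μ) {i h : Fin n} (hih : (i, h) ∈ μ) :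
    μ.filter (fun e => e.1 = i) = {(i, h)} := by
  ext e
  simp only [mem_filter, mem_singleton]
  exact ⟨fun he => hμ.2.1 e he.1 _ hih he.2, by rintro rfl; exact ⟨hih, rfl⟩⟩

theorem IsMatching.sum_snd {M : Type*} [AddCommMonoid M] (hμ : I.IsMatching μ) (u : Fin n → M) :
    ∑ e ∈ μ, u e.2 = ∑ h ∈ μ.image Prod.snd, u h :=
  (sum_image fun e he e' he' => hμ.2.2 e he e' he').symm

theorem IsMatching.card_image_snd (hμ : I.IsMatching μ) : #(μ.image Prod.snd) = #μ :=
  card_image_of_injOn fun e he e' he' => hμ.2.2 e he e' he'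

theorem IsMatching.exists_notMem_of_one_lt_card (hμ : I.IsMatching μ) {S : Finset (Fin n)}
    (hS : 1 < #S) (h : Fin n) : ∃ a ∈ S, (a, h) ∉ μ := by
  obtain ⟨a, ha, b, hb, hab⟩ := one_lt_card.1 hS
  by_cases hah : (a, h) ∈ μ
  · exact ⟨b, hb, fun hbh => hab (congrArg Prod.fst (hμ.2.2 _ hah _ hbh rfl))⟩
  · exact ⟨a, ha, hah⟩

theorem isMatching_image_of_injOn {S : Finset (Fin n)} {owner : Fin n → Fin n}
    (hmem : ∀ h ∈ S, h ∈ I.accept (owner h)) (hinj : Set.InjOn owner S) :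
    I.IsMatching (S.image fun h => (owner h, h)) := by
  simp only [IsMatching, forall_mem_image]
  exact ⟨hmem, fun h hh h' hh' heq => by rw [hinj hh hh' heq], fun h _ h' _ heq => by rw [heq]⟩

theorem IsMaxWeightMatching.paretoOptimal {w : Fin n × Fin n → ℝ}
    (hμ : I.IsMaxWeightMatching w μ) (hpos : ∀ i, ∀ h ∈ I.accept i, 0 < w (i, h))
    (hpref : ∀ i, ∀ h ∈ I.accept i, ∀ h' ∈ I.accept i, I.pref i h h' ↔ w (i, h') ≤ w (i, h)) :
    I.ParetoOptimal μ := by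
  refine ⟨hμ.1, ?_⟩
  rintro ⟨ν, hν, hweak, i₀, hstrict⟩
  have hlt : weightSum w μ < weightSum w ν := by
    rw [weightSum, weightSum, ← sum_fiberwise μ Prod.fst, ← sum_fiberwise ν Prod.fst]
    refine sum_lt_sum (fun i _ => ?_) ⟨i₀, mem_univ _, ?_⟩
    · rcases hweak i with hun | ⟨h, h', hh, hh', hle⟩
      · rw [filter_false_of_mem fun e he hei => hun e.2 (hei ▸ he), sum_empty]
        exact sum_nonneg fun e he => (hpos _ _ (hν.1 e (mem_filter.1 he).1)).le
      · rw [hμ.1.filter_fst_eq hh, hν.filter_fst_eq hh', sum_singleton, sum_singleton]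
        exact (hpref i _ (hν.1 _ hh') _ (hμ.1.1 _ hh)).1 hle
    · rcases hstrict with ⟨hun, h', hh'⟩ | ⟨h, h', hh, hh', hlt⟩
      · rw [filter_false_of_mem fun e he hei => hun e.2 (hei ▸ he), sum_empty,
          hν.filter_fst_eq hh', sum_singleton]
        exact hpos _ _ (hν.1 _ hh')
      · rw [hμ.1.filter_fst_eq hh, hν.filter_fst_eq hh', sum_singleton, sum_singleton]
        exact lt_of_not_ge fun hge => hlt.2 ((hpref i₀ _ (hμ.1.1 _ hh) _ (hν.1 _ hh')).2 hge)
  exact hlt.not_ge (hμ.2 ν hν)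

/-- `μ` uses every object that is acceptable to some agent. This is the form in which matchings
with the property `X` are exhibited. -/
def CoversAcceptable (I : OSMInstance n) (μ : Finset (Fin n × Fin n)) : Prop :=
  ∀ i, I.accept i ⊆ μ.image Prod.snd

theorem CoversAcceptable.image_snd_subset (hcov : I.CoversAcceptable μ) (hν : I.IsMatching ν) :
    ν.image Prod.snd ⊆ μ.image Prod.snd :=
  image_subset_iff.2 fun e he => hcov e.1 (hν.1 e he)

theorem CoversAcceptable.sum_snd_le {M : Type*} [AddCommMonoid M] [PartialOrder M]
    [IsOrderedAddMonoid M] (hcov : I.CoversAcceptable μ) (hμ : I.IsMatching μ)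
    (hν : I.IsMatching ν) {u : Fin n → M} (hu : ∀ h, 0 ≤ u h) :
    ∑ e ∈ ν, u e.2 ≤ ∑ e ∈ μ, u e.2 := by
  rw [hμ.sum_snd, hν.sum_snd]
  exact sum_le_sum_of_subset_of_nonneg (hcov.image_snd_subset hν) fun h _ _ => hu h

theorem CoversAcceptable.card_le (hcov : I.CoversAcceptable μ) (hμ : I.IsMatching μ)
    (hν : I.IsMatching ν) : #ν ≤ #μ := by
  rw [← hν.card_image_snd, ← hμ.card_image_snd]
  exact card_le_card (hcov.image_snd_subset hν)

theorem CoversAcceptable.of_card_eq (hcov : I.CoversAcceptable μ) (hμ : I.IsMatching μ)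
    (hν : I.IsMatching ν) (hcard : #ν = #μ) : I.CoversAcceptable ν := by
  have himage : ν.image Prod.snd = μ.image Prod.snd :=
    eq_of_subset_of_card_le (hcov.image_snd_subset hν)
      (by rw [hν.card_image_snd, hμ.card_image_snd, hcard])
  exact fun i => himage ▸ hcov i

theorem IsMatching.sig_eq_sum {rk : Fin n → ℕ}
    (hrk : ∀ i, ∀ h ∈ I.accept i, I.edgeRank (i, h) = rk h) (hμ : I.IsMatching μ) (r : ℕ) :
    I.sig μ r = ∑ e ∈ μ, if rk e.2 = r then 1 else 0 := by
  rw [sig, card_filter, Nat.cast_sum]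
  refine sum_congr rfl fun e he => ?_
  rw [hrk e.1 e.2 (hμ.1 e he), Nat.cast_ite, Nat.cast_one, Nat.cast_zero]

theorem CoversAcceptable.sig_le {rk : Fin n → ℕ}
    (hrk : ∀ i, ∀ h ∈ I.accept i, I.edgeRank (i, h) = rk h) (hcov : I.CoversAcceptable μ)
    (hμ : I.IsMatching μ) (hν : I.IsMatching ν) (r : ℕ) : I.sig ν r ≤ I.sig μ r := by
  rw [hμ.sig_eq_sum hrk, hν.sig_eq_sum hrk]
  exact hcov.sum_snd_le hμ hν (u := fun h => if rk h = r then 1 else 0) fun h => by positivity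

theorem CoversAcceptable.paretoOptimal {u : Fin n → ℝ} (hu : ∀ h, 0 < u h)
    (hpref : ∀ i, ∀ h ∈ I.accept i, ∀ h' ∈ I.accept i, I.pref i h h' ↔ u h' ≤ u h)
    (hcov : I.CoversAcceptable μ) (hμ : I.IsMatching μ) : I.ParetoOptimal μ :=
  IsMaxWeightMatching.paretoOptimal (w := fun e => u e.2)
    ⟨hμ, fun _ hν => hcov.sum_snd_le hμ hν fun h => (hu h).le⟩ (fun _ h _ => hu h) hpref

theorem CoversAcceptable.satisfiesProp {u : Fin n → ℝ} {rk : Fin n → ℕ} (hu : ∀ h, 0 < u h)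
    (hpref : ∀ i, ∀ h ∈ I.accept i, ∀ h' ∈ I.accept i, I.pref i h h' ↔ u h' ≤ u h)
    (hrk : ∀ i, ∀ h ∈ I.accept i, I.edgeRank (i, h) = rk h)
    (hcov : I.CoversAcceptable μ) (hμ : I.IsMatching μ) (X : MatchProp) :
    SatisfiesProp X I μ := by
  cases X with
  | po => exact hcov.paretoOptimal hu hpref hμ
  | rm => exact ⟨hμ, fun ν hν => .of_forall_le fun j _ => hcov.sig_le hrk hμ hν _⟩
  | mcrm =>
    refine ⟨hμ, fun ν hν => .of_forall_le fun j _ => ?_⟩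
    split_ifs
    · exact_mod_cast hcov.card_le hμ hν
    · exact hcov.sig_le hrk hμ hν j
  | fair =>
    refine ⟨hμ, fun ν hν => ?_⟩
    rcases (hcov.card_le hμ hν).eq_or_lt with heq | hlt
    · have hcovν := hcov.of_card_eq hμ hν heq
      have hsig (r : ℕ) : I.sig ν r = I.sig μ r :=
        (hcov.sig_le hrk hμ hν r).antisymm (hcovν.sig_le hrk hν hμ r)
      exact .inl fun j _ => by simp only [heq, hsig]
    · exact .inr ⟨0, n.succ_pos, by simp, by simpa using hlt⟩

theorem IsMatching.SW_le_sum {v : Fin n → Fin n → ℝ} (hμ : I.IsMatching μ) {S : Finset (Fin n)}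
    {β : Fin n → ℝ} (hβ : ∀ h ∈ S, 0 ≤ β h) (hv : ∀ i, ∀ h ∈ S, (i, h) ∈ μ → v i h ≤ β h)
    (hv₀ : ∀ i, ∀ h ∉ S, v i h ≤ 0) : I.SW v μ ≤ ∑ h ∈ S, β h :=
  calc I.SW v μ ≤ ∑ e ∈ μ, if e.2 ∈ S then β e.2 else 0 := by
        refine sum_le_sum fun e he => ?_
        split_ifs with heS
        · exact hv _ _ heS he
        · exact hv₀ _ _ heS
    _ = ∑ h ∈ μ.image Prod.snd, if h ∈ S then β h else 0 :=
        hμ.sum_snd fun h => if h ∈ S then β h else 0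
    _ ≤ ∑ h, if h ∈ S then β h else 0 :=
        sum_le_sum_of_subset_of_nonneg (subset_univ _) fun h _ _ => by
          split_ifs with hS
          exacts [hβ h hS, le_rfl]
    _ = ∑ h ∈ S, β h := by rw [sum_ite_mem, univ_inter]

theorem sum_le_SW {v : Fin n → Fin n → ℝ} (hv : ∀ i h, 0 ≤ v i h) {S : Finset (Fin n)}
    {owner : Fin n → Fin n} (hμ : ∀ h ∈ S, (owner h, h) ∈ μ) :
    ∑ h ∈ S, v (owner h) h ≤ I.SW v μ := by
  rw [← sum_image (g := fun h => (owner h, h)) (f := fun e => v e.1 e.2)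
    fun h _ h' _ heq => congrArg Prod.snd heq]
  exact sum_le_sum_of_subset_of_nonneg (image_subset_iff.2 hμ) fun e _ _ => hv _ _

end OSMInstance

/-- The data of an instance in which agent `i` accepts exactly the common favourite `top`, her
middle object `mid i` and the common worst object `bot`, in this strict order. -/
structure TieredMarket (n : ℕ) where
  top : Fin n
  bot : Fin n
  mid : Fin n → Fin n
  top_ne_bot : top ≠ bot
  mid_ne_top : ∀ i, mid i ≠ top
  mid_ne_bot : ∀ i, mid i ≠ bot

namespace TieredMarket

variable {n : ℕ} (M : TieredMarket n)

/-- The common level of an object, higher levels being preferred. -/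
def tier (h : Fin n) : ℕ := if h = M.top then 2 else if h = M.bot then 0 else 1

@[simp] theorem tier_top : M.tier M.top = 2 := by simp [tier]

@[simp] theorem tier_bot : M.tier M.bot = 0 := by simp [tier, M.top_ne_bot.symm]

@[simp] theorem tier_mid (i : Fin n) : M.tier (M.mid i) = 1 := by
  simp [tier, M.mid_ne_top, M.mid_ne_bot]

/-- The matching instance described by a tiered market. -/
def toInstance : OSMInstance n where
  accept i := {M.top, M.mid i, M.bot}
  accept_nonempty _ := insert_nonempty _ _
  pref _ h h' := M.tier h' ≤ M.tier h
  pref_refl _ _ _ := le_rfl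
  pref_trans _ _ _ _ _ _ _ h₁ h₂ := h₂.trans h₁
  pref_total _ _ _ _ _ := le_total _ _

/-- The valuation profile in which agent `i` values her middle object `w i`, the favourite `1`
and everything else `0`. -/
noncomputable def profile (w : Fin n → ℝ) (i h : Fin n) : ℝ :=
  if h = M.top then 1 else if h = M.mid i then w i else 0

/-- The middle objects. -/
def mids : Finset (Fin n) := univ.image M.mid

/-- The block of agents whose middle object is `k`. -/
def block (k : Fin n) : Finset (Fin n) := univ.filter fun i => M.mid i = k

theorem accept_eq (i : Fin n) : M.toInstance.accept i = {M.top, M.mid i, M.bot} := rfl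

theorem mem_accept {i h : Fin n} :
    h ∈ M.toInstance.accept i ↔ h = M.top ∨ h = M.mid i ∨ h = M.bot := by
  simp [accept_eq]

theorem pref_iff {i h h' : Fin n} : M.toInstance.pref i h h' ↔ M.tier h' ≤ M.tier h := Iff.rfl

theorem strictPref_iff {i h h' : Fin n} :
    M.toInstance.strictPref i h h' ↔ M.tier h' < M.tier h := by
  rw [OSMInstance.strictPref, pref_iff, pref_iff, lt_iff_le_not_ge]

@[simp] theorem profile_top (w : Fin n → ℝ) (i : Fin n) : M.profile w i M.top = 1 := if_pos rfl

@[simp] theorem profile_mid (w : Fin n → ℝ) (i : Fin n) : M.profile w i (M.mid i) = w i := by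
  simp [profile, M.mid_ne_top]

@[simp] theorem profile_bot (w : Fin n → ℝ) (i : Fin n) : M.profile w i M.bot = 0 := by
  simp [profile, M.top_ne_bot.symm, (M.mid_ne_bot i).symm]

theorem mid_mem_mids (i : Fin n) : M.mid i ∈ M.mids := mem_image_of_mem _ (mem_univ i)

theorem top_notMem_mids : M.top ∉ M.mids := by simp [mids, M.mid_ne_top]

theorem bot_notMem_mids : M.bot ∉ M.mids := by simp [mids, M.mid_ne_bot]

theorem mem_block {i k : Fin n} : i ∈ M.block k ↔ M.mid i = k := by simp [block]

theorem edgeRank_eq {i h : Fin n} (hh : h ∈ M.toInstance.accept i) :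
    M.toInstance.edgeRank (i, h) = 3 - M.tier h := by
  have hbetter : M.toInstance.edgeRank (i, h) =
      #(({M.top, M.mid i, M.bot} : Finset (Fin n)).filter (M.tier h < M.tier ·)) + 1 := by
    simp only [OSMInstance.edgeRank, strictPref_iff, accept_eq]
  rw [hbetter]
  rcases M.mem_accept.1 hh with rfl | rfl | rfl <;>
    simp [filter_insert, filter_singleton, (M.mid_ne_top i).symm]

theorem consistent_profile {w : Fin n → ℝ} (hw : ∀ i, 0 < w i ∧ w i < 1) :
    M.toInstance.Consistent (M.profile w) := by
  refine ⟨fun i h => ?_, fun i h hh => ?_, fun i h h' hh hh' => ?_⟩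
  · have := hw i
    unfold profile
    split_ifs <;> constructor <;> linarith
  · simp only [mem_accept, not_or] at hh
    simp [profile, hh.1, hh.2.1]
  · obtain ⟨hpos, hlt⟩ := hw i
    rw [mem_accept] at hh hh'
    rcases hh with rfl | rfl | rfl <;> rcases hh' with rfl | rfl | rfl <;>
      simp [pref_iff, hpos, hpos.le, hlt, hlt.le]

theorem unitRange_profile (w : Fin n → ℝ) : M.toInstance.UnitRange (M.profile w) := fun i =>
  ⟨⟨M.top, by simp [mem_accept]⟩, ⟨M.bot, by simp [mem_accept]⟩,
    M.top, by simp [mem_accept], M.bot, by simp [mem_accept], by simp [strictPref_iff]⟩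

theorem satisfiesProp_of_coversAcceptable {μ : Finset (Fin n × Fin n)}
    (hcov : M.toInstance.CoversAcceptable μ) (hμ : M.toInstance.IsMatching μ) (X : MatchProp) :
    SatisfiesProp X M.toInstance μ :=
  hcov.satisfiesProp (u := fun h => M.tier h + 1) (fun h => by positivity)
    (fun i h _ h' _ => by simp [pref_iff]) (fun _ _ => M.edgeRank_eq) hμ X

theorem exists_satisfiesProp_of_owner {owner : Fin n → Fin n} {a b : Fin n}
    (howner : ∀ k ∈ M.mids, M.mid (owner k) = k) (hab : a ≠ b) (ha : a ∉ M.mids.image owner)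
    (hb : b ∉ M.mids.image owner) :
    ∃ μ, (∀ X, SatisfiesProp X M.toInstance μ) ∧ ∀ k ∈ M.mids, (owner k, k) ∈ μ := by
  let owner' : Fin n → Fin n := Function.update (Function.update owner M.bot b) M.top a
  have htop : owner' M.top = a := Function.update_self ..
  have hbot : owner' M.bot = b := by simp [owner', M.top_ne_bot.symm]
  have hmid : ∀ k ∈ M.mids, owner' k = owner k := fun k hk => by
    simp [owner', ne_of_mem_of_not_mem hk M.top_notMem_mids,
      ne_of_mem_of_not_mem hk M.bot_notMem_mids]
  let S : Finset (Fin n) := insert M.top (insert M.bot M.mids)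
  have hmem : ∀ h ∈ S, h ∈ M.toInstance.accept (owner' h) := by
    simp only [S, forall_mem_insert, mem_accept, true_or, or_true, true_and]
    intro k hk
    rw [hmid k hk, howner k hk]
    exact .inr (.inl rfl)
  have hinj : Set.InjOn owner' S := by
    have himage : owner' '' M.mids = M.mids.image owner := by
      rw [coe_image]
      exact Set.image_congr hmid
    have hinj_mids : Set.InjOn owner' M.mids := fun k hk l hl hkl => by
      rw [hmid k hk, hmid l hl] at hkl
      rw [← howner k hk, ← howner l hl, hkl]
    simp only [S, coe_insert]
    rw [Set.injOn_insert (by simp [M.top_ne_bot, M.top_notMem_mids]),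
      Set.injOn_insert (by simpa using M.bot_notMem_mids), Set.image_insert_eq, himage, htop, hbot]
    exact ⟨⟨hinj_mids, by simpa using hb⟩, by simpa [hab] using ha⟩
  refine ⟨S.image fun h => (owner' h, h), M.satisfiesProp_of_coversAcceptable (fun i h hh => ?_)
    (OSMInstance.isMatching_image_of_injOn hmem hinj), fun k hk => ?_⟩
  · have hhS : h ∈ S := by
      rcases M.mem_accept.1 hh with rfl | rfl | rfl <;> simp [S, M.mid_mem_mids]
    exact mem_image.2 ⟨_, mem_image_of_mem _ hhS, rfl⟩
  · exact mem_image.2 ⟨k, by simp [S, hk], by rw [hmid k hk]⟩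

theorem exists_ne_notMem_image_of_two_lt_card_block {owner : Fin n → Fin n}
    (howner : ∀ k ∈ M.mids, M.mid (owner k) = k) {k : Fin n} (hk : 2 < #(M.block k)) :
    ∃ a b, a ≠ b ∧ a ∉ M.mids.image owner ∧ b ∉ M.mids.image owner := by
  have hcard : 1 < #((M.block k).erase (owner k)) := by
    have := pred_card_le_card_erase (s := M.block k) (a := owner k)
    omega
  have hspare : ∀ a ∈ (M.block k).erase (owner k), a ∉ M.mids.image owner := by
    rintro a ha hmem
    obtain ⟨l, hl, rfl⟩ := mem_image.1 hmem
    obtain ⟨hne, hblock⟩ := mem_erase.1 ha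
    obtain rfl : l = k := (howner l hl).symm.trans (M.mem_block.1 hblock)
    exact hne rfl
  obtain ⟨a, ha, b, hb, hab⟩ := one_lt_card.1 hcard
  exact ⟨a, b, hab, hspare a ha, hspare b hb⟩

theorem profile_nonneg {w : Fin n → ℝ} (hw : ∀ i, 0 ≤ w i) (i h : Fin n) :
    0 ≤ M.profile w i h := by
  unfold profile
  split_ifs
  exacts [zero_le_one, hw i, le_rfl]

theorem profile_eq_zero (w : Fin n → ℝ) (i : Fin n) {h : Fin n} (hh : h ∉ insert M.top M.mids) :
    M.profile w i h = 0 := by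
  rw [mem_insert, not_or] at hh
  rw [profile, if_neg hh.1, if_neg (ne_of_mem_of_not_mem (M.mid_mem_mids i) hh.2).symm]

theorem SW_profile_le {μ : Finset (Fin n × Fin n)} (hμ : M.toInstance.IsMatching μ)
    {w β : Fin n → ℝ} (hβ : ∀ k ∈ M.mids, 0 ≤ β k)
    (hw : ∀ i, (i, M.mid i) ∈ μ → w i ≤ β (M.mid i)) :
    M.toInstance.SW (M.profile w) μ ≤ 1 + ∑ k ∈ M.mids, β k :=
  calc M.toInstance.SW (M.profile w) μ
      ≤ ∑ h ∈ insert M.top M.mids, Function.update β M.top 1 h := by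
        refine hμ.SW_le_sum (fun h hh => ?_) (fun i h hh hih => ?_)
          fun i h hh => (M.profile_eq_zero w i hh).le
        · rw [Function.update_apply]
          split_ifs with htop
          exacts [zero_le_one, hβ h (mem_of_mem_insert_of_ne hh htop)]
        · rw [Function.update_apply, profile]
          split_ifs with htop hmid
          exacts [le_rfl, hmid ▸ hw i (hmid ▸ hih), hβ h (mem_of_mem_insert_of_ne hh htop)]
    _ = 1 + ∑ k ∈ M.mids, β k := by
        rw [sum_insert M.top_notMem_mids, Function.update_self,
          sum_update_of_notMem M.top_notMem_mids]

theorem sum_le_SW_profile {μ : Finset (Fin n × Fin n)} {w : Fin n → ℝ}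
    (hw : ∀ i, 0 ≤ w i) {owner : Fin n → Fin n} (howner : ∀ k ∈ M.mids, M.mid (owner k) = k)
    (hμ : ∀ k ∈ M.mids, (owner k, k) ∈ μ) :
    ∑ k ∈ M.mids, w (owner k) ≤ M.toInstance.SW (M.profile w) μ := by
  have hvalue : ∀ k ∈ M.mids, w (owner k) = M.profile w (owner k) k := fun k hk => by
    simpa only [howner k hk] using (M.profile_mid w (owner k)).symm
  rw [sum_congr rfl hvalue]
  exact OSMInstance.sum_le_SW (M.profile_nonneg hw) hμ

theorem threshold_le_profile_congr {T : Fin n → Fin n → ℝ} {w w' : Fin n → ℝ}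
    (h : ∀ i, T i (M.mid i) ≤ w i ↔ T i (M.mid i) ≤ w' i) :
    (fun i j => decide (T i j ≤ M.profile w i j)) =
      fun i j => decide (T i j ≤ M.profile w' i j) := by
  ext i j
  rw [decide_eq_decide, profile, profile]
  split_ifs with htop hmid
  exacts [.rfl, hmid ▸ h i, .rfl]

/-- The weights of the adversary: every agent values her middle object `k` at `lo k`, except that
the agent `owner k` of the block of `k` values it at `hi k`. -/
noncomputable def raisedWeight (lo hi : Fin n → ℝ) (owner : Fin n → Fin n) (i : Fin n) : ℝ :=
  if i = owner (M.mid i) then hi (M.mid i) else lo (M.mid i)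

theorem raisedWeight_owner {lo hi : Fin n → ℝ} {owner : Fin n → Fin n} {k : Fin n}
    (hk : M.mid (owner k) = k) : M.raisedWeight lo hi owner (owner k) = hi k := by
  rw [raisedWeight, hk, if_pos rfl]

theorem raisedWeight_pos_lt_one {lo hi : Fin n → ℝ} (hlo : ∀ k ∈ M.mids, 0 < lo k ∧ lo k < 1)
    (hhi : ∀ k ∈ M.mids, 0 < hi k ∧ hi k < 1) (owner : Fin n → Fin n) (i : Fin n) :
    0 < M.raisedWeight lo hi owner i ∧ M.raisedWeight lo hi owner i < 1 := by
  rw [raisedWeight]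
  split_ifs
  exacts [hhi _ (M.mid_mem_mids i), hlo _ (M.mid_mem_mids i)]

theorem threshold_le_raisedWeight {T : Fin n → Fin n → ℝ} {lo hi : Fin n → ℝ}
    {owner : Fin n → Fin n}
    (hT : ∀ k ∈ M.mids, T (owner k) k ≤ lo k ↔ T (owner k) k ≤ hi k) (i : Fin n) :
    T i (M.mid i) ≤ M.raisedWeight lo hi owner i ↔ T i (M.mid i) ≤ lo (M.mid i) := by
  rw [raisedWeight]
  split_ifs with hi
  · have hTi := hT (M.mid i) (M.mid_mem_mids i)
    rw [← hi] at hTi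
    exact hTi.symm
  · exact .rfl

theorem SW_profile_raisedWeight_le {μ : Finset (Fin n × Fin n)} (hμ : M.toInstance.IsMatching μ)
    {lo hi : Fin n → ℝ} {owner : Fin n → Fin n} (hlo : ∀ k ∈ M.mids, 0 ≤ lo k)
    (howner : ∀ k ∈ M.mids, (owner k, k) ∉ μ) :
    M.toInstance.SW (M.profile (M.raisedWeight lo hi owner)) μ ≤ 1 + ∑ k ∈ M.mids, lo k := by
  refine M.SW_profile_le hμ hlo fun i hi => ?_
  have hne : i ≠ owner (M.mid i) := fun heq => howner _ (M.mid_mem_mids i) (heq ▸ hi)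
  rw [raisedWeight, if_neg hne]

theorem exists_satisfiesProp_sum_le_SW {k₀ : Fin n} (hk₀ : 2 < #(M.block k₀)) {lo hi : Fin n → ℝ}
    {owner : Fin n → Fin n} (howner : ∀ k ∈ M.mids, M.mid (owner k) = k)
    (hw : ∀ i, 0 ≤ M.raisedWeight lo hi owner i) :
    ∃ μ, (∀ X, SatisfiesProp X M.toInstance μ) ∧
      ∑ k ∈ M.mids, hi k ≤ M.toInstance.SW (M.profile (M.raisedWeight lo hi owner)) μ := by
  obtain ⟨a, b, hab, ha, hb⟩ := M.exists_ne_notMem_image_of_two_lt_card_block howner hk₀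
  obtain ⟨μ, hμ, hμowner⟩ := M.exists_satisfiesProp_of_owner howner hab ha hb
  refine ⟨μ, hμ, ?_⟩
  rw [sum_congr rfl fun k hk => (M.raisedWeight_owner (howner k hk)).symm]
  exact M.sum_le_SW_profile hw howner hμowner

theorem exists_profile_SW_le (hblock : ∀ k ∈ M.mids, 2 < #(M.block k)) {s : ℝ} (hs : 0 < s)
    (hs' : s ≤ 1 / 2) (T : Fin n → Fin n → ℝ) (f : (Fin n → Fin n → Bool) → Finset (Fin n × Fin n))
    (hf : ∀ v, M.toInstance.Consistent v → M.toInstance.UnitRange v →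
      M.toInstance.IsMatching (f fun i j => decide (T i j ≤ v i j))) :
    ∃ v, M.toInstance.Consistent v ∧ M.toInstance.UnitRange v ∧
      ∃ μ, (∀ X, SatisfiesProp X M.toInstance μ) ∧ #M.mids * s ≤ M.toInstance.SW v μ ∧
        M.toInstance.SW v (f fun i j => decide (T i j ≤ v i j)) ≤
          1 + 2 * s * M.toInstance.SW v μ := by
  have : Nonempty (Fin n) := ⟨M.top⟩
  choose! lo hi hlo hlohi hshi hhi htwo using fun k (hk : k ∈ M.mids) =>
    exists_one_lt_card_filter_le_iff_le (hblock k hk) (fun i => T i k) hs hs'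
  have hlo_lt : ∀ k ∈ M.mids, 0 < lo k ∧ lo k < 1 := fun k hk =>
    ⟨hlo k hk, by nlinarith [hlohi k hk, hshi k hk, hhi k hk]⟩
  let base : Fin n → ℝ := fun i => lo (M.mid i)
  let μ₀ := f fun i j => decide (T i j ≤ M.profile base i j)
  have hμ₀ : M.toInstance.IsMatching μ₀ :=
    hf _ (M.consistent_profile fun i => hlo_lt _ (M.mid_mem_mids i)) (M.unitRange_profile base)
  choose! owner hmem hmiss using fun k (hk : k ∈ M.mids) =>
    hμ₀.exists_notMem_of_one_lt_card (htwo k hk) k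
  have howner : ∀ k ∈ M.mids, M.mid (owner k) = k := fun k hk =>
    M.mem_block.1 (mem_filter.1 (hmem k hk)).1
  let w := M.raisedWeight lo hi owner
  have hw := M.raisedWeight_pos_lt_one hlo_lt
    (fun k hk => ⟨hs.trans_le (hshi k hk), hhi k hk⟩) owner
  have hanswers : (f fun i j => decide (T i j ≤ M.profile w i j)) = μ₀ :=
    congrArg f <| M.threshold_le_profile_congr <|
      M.threshold_le_raisedWeight fun k hk => (mem_filter.1 (hmem k hk)).2
  obtain ⟨μ, hμ, hlower⟩ := M.exists_satisfiesProp_sum_le_SW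
    (hblock _ (M.mid_mem_mids M.top)) howner fun i => (hw i).1.le
  refine ⟨M.profile w, M.consistent_profile hw, M.unitRange_profile w, μ, hμ, ?_, ?_⟩
  · rw [← nsmul_eq_mul]
    exact (card_nsmul_le_sum _ _ _ hshi).trans hlower
  · rw [hanswers]
    calc M.toInstance.SW (M.profile w) μ₀
        ≤ 1 + ∑ k ∈ M.mids, lo k :=
          M.SW_profile_raisedWeight_le hμ₀ (fun k hk => (hlo k hk).le) hmiss
      _ ≤ 1 + 2 * s * ∑ k ∈ M.mids, hi k := by
          rw [mul_sum]
          gcongr with k hk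
          exact hlohi k hk
      _ ≤ 1 + 2 * s * M.toInstance.SW (M.profile w) μ := by gcongr

end TieredMarket

/-- The tiered market with middle objects `0, …, m - 1` and blocks the residue classes modulo `m`,
so that every block has at least `3` agents as soon as `3 * m ≤ n`. -/
def cyclicMarket {n m : ℕ} (hm : 0 < m) (hmn : m + 2 ≤ n) : TieredMarket n where
  top := ⟨m, by omega⟩
  bot := ⟨m + 1, by omega⟩
  mid i := ⟨i % m, (Nat.mod_lt _ hm).trans (by omega)⟩
  top_ne_bot := by simp
  mid_ne_top i := Fin.ne_of_val_ne (Nat.mod_lt _ hm).ne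
  mid_ne_bot i := Fin.ne_of_val_ne ((Nat.mod_lt _ hm).trans m.lt_succ_self).ne

section CyclicMarket

variable {n m : ℕ} (hm : 0 < m) (hmn : m + 2 ≤ n)

theorem mids_cyclicMarket : (cyclicMarket hm hmn).mids = Iio ⟨m, by omega⟩ := by
  ext k
  simp only [TieredMarket.mids, cyclicMarket, mem_image, mem_univ, true_and, mem_Iio, Fin.lt_def]
  constructor
  · rintro ⟨i, rfl⟩
    exact Nat.mod_lt _ hm
  · exact fun hk => ⟨k, Fin.ext (Nat.mod_eq_of_lt hk)⟩

theorem two_lt_card_block_cyclicMarket (hmn' : 3 * m ≤ n) {k : Fin n}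
    (hk : k ∈ (cyclicMarket hm hmn).mids) : 2 < #((cyclicMarket hm hmn).block k) := by
  have hkm : k.val < m := by simpa [mids_cyclicMarket, Fin.lt_def] using hk
  refine two_lt_card.2 ⟨k, ?_, ⟨k + m, by omega⟩, ?_, ⟨k + 2 * m, by omega⟩, ?_, ?_, ?_, ?_⟩ <;>
    simp [TieredMarket.mem_block, cyclicMarket, Fin.ext_iff, Nat.mod_eq_of_lt hkm] <;> omega

end CyclicMarket

theorem nonadaptive_unitRange_lower_bound_general {n : ℕ} (hn : 4 ≤ n) :
    ∃ I : OSMInstance n, ∀ T : Fin n → Fin n → ℝ,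
      ∀ f : (Fin n → Fin n → Bool) → Finset (Fin n × Fin n),
        (∀ v, I.Consistent v → I.UnitRange v →
          I.IsMatching (f fun i j => decide (T i j ≤ v i j))) →
        ∃ v, I.Consistent v ∧ I.UnitRange v ∧
          ∃ μ', (∀ X, SatisfiesProp X I μ') ∧
            1 / 8 * √n * I.SW v (f fun i j => decide (T i j ≤ v i j)) ≤ I.SW v μ' := by
  obtain ⟨m, hm, hmn, hnm⟩ : ∃ m, 0 < m ∧ 3 * m ≤ n ∧ n ≤ 6 * m :=
    ⟨n / 3, by omega, by omega, by omega⟩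
  have hmn' : m + 2 ≤ n := by omega
  have hsqrt : 2 ≤ √(n : ℝ) := Real.le_sqrt_of_sq_le (by norm_num; exact_mod_cast hn)
  have hpos : 0 < √(n : ℝ) := by linarith
  refine ⟨(cyclicMarket hm hmn').toInstance, fun T f hf => ?_⟩
  obtain ⟨v, hv, hv', μ, hμ, hlower, hupper⟩ := (cyclicMarket hm hmn').exists_profile_SW_le
    (fun _ => two_lt_card_block_cyclicMarket hm hmn' hmn) (s := (√n)⁻¹) (by positivity)
    (by rw [inv_le_comm₀ hpos (by norm_num)]; linarith) T f hf
  rw [mids_cyclicMarket, Fin.card_Iio] at hlower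
  refine ⟨v, hv, hv', μ, hμ, ?_⟩
  have hmul : √(n : ℝ) * (√n)⁻¹ = 1 := mul_inv_cancel₀ hpos.ne'
  have hsqrt_le : √(n : ℝ) ≤ 6 * (cyclicMarket hm hmn').toInstance.SW v μ :=
    calc √(n : ℝ) = n * (√n)⁻¹ := by rw [← div_eq_mul_inv, Real.div_sqrt]
      _ ≤ 6 * m * (√n)⁻¹ := by gcongr; exact_mod_cast hnm
      _ ≤ 6 * (cyclicMarket hm hmn').toInstance.SW v μ := by linarith
  have hscaled := mul_le_mul_of_nonneg_left hupper hpos.le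
  linear_combination (1 / 8) * hscaled + (1 / 8) * hsqrt_le +
    (1 / 4) * (cyclicMarket hm hmn').toInstance.SW v μ * hmul

/-- for all large enough `n`, every non-adaptive deterministic algorithm
asking one binary threshold query per (agent, object) pair that always outputs a
matching satisfying `X` loses a factor of at least `c·√n` in welfare on some instance
with unit-range valuations. -/
theorem nonadaptive_unitRange_lower_bound (X : MatchProp) :
    ∃ c : ℝ, 0 < c ∧ ∃ n₀ : ℕ, ∀ n : ℕ, n₀ ≤ n →
      ∀ T : OSMInstance n → Fin n → Fin n → ℝ,
        (∀ I i j, 0 ≤ T I i j ∧ T I i j ≤ 1) →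
      ∀ f : OSMInstance n → (Fin n → Fin n → Bool) → Finset (Fin n × Fin n),
        (∀ I : OSMInstance n, ∀ v : Fin n → Fin n → ℝ,
          I.Consistent v → I.UnitRange v →
            SatisfiesProp X I (f I (fun i j => decide (T I i j ≤ v i j)))) →
        ∃ I : OSMInstance n, ∃ v : Fin n → Fin n → ℝ,
          I.Consistent v ∧ I.UnitRange v ∧
          ∃ μ', SatisfiesProp X I μ' ∧
            c * Real.sqrt n *
              I.SW v (f I (fun i j => decide (T I i j ≤ v i j))) ≤ I.SW v μ' := by
  refine ⟨1 / 8, by norm_num, 4, fun n hn T _ f hf => ?_⟩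
  obtain ⟨I, hI⟩ := nonadaptive_unitRange_lower_bound_general hn
  obtain ⟨v, hv, hv', μ', hμ', hle⟩ :=
    hI (T I) (f I) fun v hv hv' => (hf I v hv hv').isMatching
  exact ⟨I, v, hv, hv', μ', hμ' X, hle⟩
end

section
/- Let X be one of the properties: Pareto optimal, rank-maximal, max-cardinality rank-maximal, fair. (i) There exist a constant c > 0 and n_0 such that for every n ≥ n_0 and every function f assigning to each instance I with n agents and n objects a matching f(I) of G_I satisfying X, there exist an instance I with n agents and n objects and a unit-sum valuation profile v consistent with I such that max{SW(μ' | v) : μ' a matching of G_I satisfying X} ≥ c·n²·SW(f(I) | v). (ii) This bound is asymptotically tight: for every instance I with n ≥ 2 agents and n objects, every matching μ of G_I satisfying X, and every unit-sum valuation profile v consistent with I, max{SW(μ' | v) : μ' a matching of G_I satisfying X} ≤ n²·SW(μ | v). -/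
open Finset
open scoped Classical

/-!
A Pareto optimal matching gives some agent one of its favourite objects: otherwise,
following each agent to the owner of its favourite closes up into cycles, and trading along them is
an improvement. That agent alone contributes at least `1 / n`, whereas no matching has welfare above
`n`, which is the upper bound.

For the lower bound, make agents come in pairs of twins with identical preferences: a common
favourite object, a second choice private to the pair, and about `n / 2` common last resorts.
Whatever matching `μ` is chosen, Pareto optimality hands the second choice of every pair not holding
the favourite to one of its twins. Give that twin a value of only `1 / n ^ 2` for it, give the other
twin the value `1 / 3` for it, and spread the value of the holder of the favourite nearly evenly.
Exchanging all twins preserves every anonymous property of `μ`, and raises the welfare from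
`O(1 / n)` to `Ω(n)`.
-/

theorem LexLe.eq_of_sum_le {len : ℕ} {f g : ℕ → ℤ} (h : LexLe len f g)
    (hle : ∀ j ≤ len, ∑ i ∈ range j, g i ≤ ∑ i ∈ range j, f i) : ∀ j < len, f j = g j := by
  refine h.resolve_right ?_
  rintro ⟨j, hj, heq, hlt⟩
  have hsum : ∑ i ∈ range j, f i = ∑ i ∈ range j, g i :=
    sum_congr rfl fun i hi => heq i (mem_range.1 hi)
  have := hle (j + 1) hj
  rw [sum_range_succ, sum_range_succ] at this
  linarith

theorem periodicPts_nonempty {α : Type*} [Finite α] [Nonempty α] (f : α → α) :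
    (Function.periodicPts f).Nonempty := by
  obtain ⟨x⟩ := ‹Nonempty α›
  obtain ⟨a, -, b, -, hab, h⟩ := Set.infinite_univ.exists_lt_map_eq_of_mapsTo
    (f := fun k : ℕ => f^[k] x) (Set.mapsTo_univ _ _) Set.finite_univ
  refine ⟨f^[a] x, b - a, Nat.sub_pos_of_lt hab, ?_⟩
  rw [Function.IsPeriodicPt, Function.IsFixedPt, ← Function.iterate_add_apply,
    Nat.sub_add_cancel hab.le]
  exact h.symm

namespace OSMInstance

variable {n : ℕ} {I : OSMInstance n} {μ ν : Finset (Fin n × Fin n)} {v : Fin n → Fin n → ℝ}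
  {i j h h' : Fin n} {k : ℕ}

/-! ### Ranks -/

theorem strictPref.trans_pref {h'' : Fin n} (hh : h ∈ I.accept i) (hh' : h' ∈ I.accept i)
    (hh'' : h'' ∈ I.accept i) (hs : I.strictPref i h h') (hp : I.pref i h' h'') :
    I.strictPref i h h'' :=
  ⟨I.pref_trans i h h' h'' hh hh' hh'' hs.1 hp,
    fun hp' => hs.2 (I.pref_trans i h' h'' h hh' hh'' hh hp hp')⟩

theorem edgeRank_le_of_pref (hh : h ∈ I.accept i) (hh' : h' ∈ I.accept i) (hp : I.pref i h' h) :
    I.edgeRank (i, h') ≤ I.edgeRank (i, h) := by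
  unfold edgeRank
  gcongr with x hx
  exact fun hs => hs.trans_pref hx hh' hh hp

theorem edgeRank_lt_of_strictPref (hh : h ∈ I.accept i) (hh' : h' ∈ I.accept i)
    (hs : I.strictPref i h' h) : I.edgeRank (i, h') < I.edgeRank (i, h) := by
  refine Nat.succ_lt_succ (card_lt_card (ssubset_iff_of_subset (fun x hx => ?_) |>.2 ⟨h', ?_, ?_⟩))
  · obtain ⟨hx, hxs⟩ := mem_filter.1 hx
    exact mem_filter.2 ⟨hx, hxs.trans_pref hx hh' hh hs.1⟩
  · exact mem_filter.2 ⟨hh', hs⟩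
  · exact fun hx => (mem_filter.1 hx).2.2 (mem_filter.1 hx).2.1

theorem edgeRank_le (I : OSMInstance n) (e : Fin n × Fin n) : I.edgeRank e ≤ n := by
  have hss : (I.accept e.1).filter (fun h' => I.strictPref e.1 h' e.2) ⊂ univ :=
    ssubset_iff_of_subset (subset_univ _) |>.2
      ⟨e.2, mem_univ _, fun hx => (mem_filter.1 hx).2.2 (mem_filter.1 hx).2.1⟩
  simpa [edgeRank, Nat.succ_le_iff] using card_lt_card hss

theorem exists_forall_pref (I : OSMInstance n) (i : Fin n) :
    ∃ t ∈ I.accept i, ∀ h ∈ I.accept i, I.pref i t h := by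
  obtain ⟨t, ht, hmin⟩ := exists_min_image (I.accept i) (fun h => I.edgeRank (i, h))
    (I.accept_nonempty i)
  refine ⟨t, ht, fun h hh => ?_⟩
  by_contra hp
  have hs : I.strictPref i h t := ⟨(I.pref_total i t h ht hh).resolve_left hp, hp⟩
  exact (edgeRank_lt_of_strictPref ht hh hs).not_ge (hmin h hh)

theorem card_filter_edgeRank_le (I : OSMInstance n) (μ : Finset (Fin n × Fin n)) (k : ℕ) :
    ((μ.filter fun e => I.edgeRank e ≤ k).card : ℤ) = ∑ r ∈ range k, I.sig μ (r + 1) := by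
  induction k with
  | zero => simp [edgeRank]
  | succ k ih =>
    rw [sum_range_succ, ← ih, sig, ← Nat.cast_add, ← card_union_of_disjoint, ← filter_or]
    · simp only [Nat.le_succ_iff]
    · exact disjoint_filter.2 fun e _ h₁ h₂ => by omega

theorem card_eq_sum_sig (I : OSMInstance n) (μ : Finset (Fin n × Fin n)) :
    (μ.card : ℤ) = ∑ r ∈ range n, I.sig μ (r + 1) := by
  rw [← card_filter_edgeRank_le, filter_true_of_mem fun e _ => I.edgeRank_le e]

/-! ### Matchings -/

theorem isMatching_iff : I.IsMatching μ ↔ (∀ i h, (i, h) ∈ μ → h ∈ I.accept i) ∧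
    (∀ i h h', (i, h) ∈ μ → (i, h') ∈ μ → h = h') ∧
    ∀ i j h, (i, h) ∈ μ → (j, h) ∈ μ → i = j := by
  simp only [IsMatching, Prod.forall, Prod.mk.injEq]
  grind

theorem IsMatching.mem_accept (hμ : I.IsMatching μ) (hi : (i, h) ∈ μ) : h ∈ I.accept i :=
  hμ.1 _ hi

theorem IsMatching.object_unique (hμ : I.IsMatching μ) (hi : (i, h) ∈ μ) (hi' : (i, h') ∈ μ) :
    h = h' :=
  (isMatching_iff.1 hμ).2.1 i h h' hi hi'

theorem IsMatching.agent_unique (hμ : I.IsMatching μ) (hi : (i, h) ∈ μ) (hj : (j, h) ∈ μ) :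
    i = j :=
  (isMatching_iff.1 hμ).2.2 i j h hi hj

theorem IsMatching.injOn_fst (hμ : I.IsMatching μ) : Set.InjOn Prod.fst (μ : Set (Fin n × Fin n)) :=
  fun e he e' he' => hμ.2.1 e he e' he'

theorem IsMatching.card_le (hμ : I.IsMatching μ) : μ.card ≤ n := by
  simpa using card_le_card_of_injOn Prod.fst (fun e _ => mem_univ e.1) hμ.injOn_fst

theorem weakImprove_of_forall (hw : ∀ h, (i, h) ∈ μ → ∃ h', (i, h') ∈ ν ∧ I.pref i h' h) :
    I.WeakImprove ν μ i := by
  by_cases hu : I.Unmatched μ i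
  · exact Or.inl hu
  · obtain ⟨h, hh⟩ := not_forall_not.1 hu
    obtain ⟨h', hh', hp⟩ := hw h hh
    exact Or.inr ⟨h, h', hh, hh', hp⟩

theorem strictImprove_of_forall (hh' : (i, h') ∈ ν)
    (hs : ∀ h, (i, h) ∈ μ → I.strictPref i h' h) : I.StrictImprove ν μ i := by
  by_cases hu : I.Unmatched μ i
  · exact Or.inl ⟨hu, h', hh'⟩
  · obtain ⟨h, hh⟩ := not_forall_not.1 hu
    exact Or.inr ⟨h, h', hh, hh', hs h hh⟩

/-! ### Lexicographic optimality implies Pareto optimality -/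

/-- The agents to which `μ` gives an object of rank at most `k`. Pareto improvements enlarge these
sets, whose cardinalities are the partial sums of the signature of `μ`. -/
noncomputable def agentsUpTo (I : OSMInstance n) (μ : Finset (Fin n × Fin n)) (k : ℕ) :
    Finset (Fin n) :=
  (μ.filter fun e => I.edgeRank e ≤ k).image Prod.fst

theorem mem_agentsUpTo : i ∈ I.agentsUpTo μ k ↔ ∃ h, (i, h) ∈ μ ∧ I.edgeRank (i, h) ≤ k := by
  simp [agentsUpTo]

theorem IsMatching.card_agentsUpTo (hμ : I.IsMatching μ) (k : ℕ) :
    ((I.agentsUpTo μ k).card : ℤ) = ∑ r ∈ range k, I.sig μ (r + 1) := by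
  rw [agentsUpTo, card_image_of_injOn (hμ.injOn_fst.mono (filter_subset _ _)),
    card_filter_edgeRank_le]

theorem WeakImprove.mem_agentsUpTo (hμ : I.IsMatching μ) (hν : I.IsMatching ν)
    (hw : I.WeakImprove ν μ i) (hi : i ∈ I.agentsUpTo μ k) : i ∈ I.agentsUpTo ν k := by
  obtain ⟨h, hh, hk⟩ := OSMInstance.mem_agentsUpTo.1 hi
  rcases hw with hu | ⟨h₁, h', hh₁, hh', hp⟩
  · exact absurd hh (hu h)
  · obtain rfl := hμ.object_unique hh hh₁
    have hle := edgeRank_le_of_pref (hμ.mem_accept hh) (hν.mem_accept hh') hp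
    exact OSMInstance.mem_agentsUpTo.2 ⟨h', hh', hle.trans hk⟩

theorem StrictImprove.exists_mem_agentsUpTo (hμ : I.IsMatching μ) (hν : I.IsMatching ν)
    (hs : I.StrictImprove ν μ i) : ∃ k ≤ n, i ∈ I.agentsUpTo ν k ∧ i ∉ I.agentsUpTo μ k := by
  simp only [mem_agentsUpTo, not_exists, not_and, not_le]
  rcases hs with ⟨hu, h', hh'⟩ | ⟨h, h', hh, hh', hs⟩
  · exact ⟨_, I.edgeRank_le _, ⟨h', hh', le_rfl⟩, fun h hh => absurd hh (hu h)⟩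
  · refine ⟨_, I.edgeRank_le _, ⟨h', hh', le_rfl⟩, fun h₁ hh₁ => ?_⟩
    obtain rfl := hμ.object_unique hh hh₁
    exact edgeRank_lt_of_strictPref (hμ.mem_accept hh) (hν.mem_accept hh') hs

theorem IsMatching.paretoOptimal_of_sig_eq (hμ : I.IsMatching μ)
    (hsig : ∀ ν, I.IsMatching ν →
      (∀ k, ∑ r ∈ range k, I.sig μ (r + 1) ≤ ∑ r ∈ range k, I.sig ν (r + 1)) →
      ∀ r < n, I.sig ν (r + 1) = I.sig μ (r + 1)) : I.ParetoOptimal μ := by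
  refine ⟨hμ, ?_⟩
  rintro ⟨ν, hν, hw, i, hs⟩
  have hsub : ∀ k, I.agentsUpTo μ k ⊆ I.agentsUpTo ν k :=
    fun k i hi => (hw i).mem_agentsUpTo hμ hν hi
  have heq := hsig ν hν fun k => by
    rw [← hμ.card_agentsUpTo, ← hν.card_agentsUpTo]
    exact_mod_cast card_le_card (hsub k)
  obtain ⟨k, hk, hiν, hiμ⟩ := hs.exists_mem_agentsUpTo hμ hν
  have hcard : (I.agentsUpTo ν k).card = (I.agentsUpTo μ k).card := by
    zify
    rw [hν.card_agentsUpTo, hμ.card_agentsUpTo]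
    exact sum_congr rfl fun r hr => heq r ((mem_range.1 hr).trans_le hk)
  exact hiμ (eq_of_subset_of_card_le (hsub k) hcard.le ▸ hiν)

theorem RankMaximal.paretoOptimal (hμ : I.RankMaximal μ) : I.ParetoOptimal μ :=
  hμ.1.paretoOptimal_of_sig_eq fun ν hν hle => (hμ.2 ν hν).eq_of_sum_le fun k _ => hle k

theorem sum_range_succ_card_sig (I : OSMInstance n) (μ : Finset (Fin n × Fin n)) (k : ℕ) :
    ∑ j ∈ range (k + 1), (if j = 0 then (μ.card : ℤ) else I.sig μ j) =
      ∑ r ∈ range k, I.sig μ (r + 1) + ∑ r ∈ range n, I.sig μ (r + 1) := by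
  rw [← card_eq_sum_sig, sum_range_succ']
  simp

theorem MaxCardRankMaximal.paretoOptimal (hμ : I.MaxCardRankMaximal μ) : I.ParetoOptimal μ := by
  refine hμ.1.paretoOptimal_of_sig_eq fun ν hν hle r hr => ?_
  have heq := (hμ.2 ν hν).eq_of_sum_le (fun j _ => ?_) (r + 1) (by omega)
  · simpa using heq
  · cases j with
    | zero => simp
    | succ k =>
      rw [sum_range_succ_card_sig, sum_range_succ_card_sig]
      exact add_le_add (hle k) (hle n)

theorem sum_range_succ_card_neg_sig (I : OSMInstance n) (μ : Finset (Fin n × Fin n))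
    (hk : k ≤ n) :
    ∑ j ∈ range (k + 1), (if j = 0 then (μ.card : ℤ) else -I.sig μ (n + 1 - j)) =
      ∑ r ∈ range (n - k), I.sig μ (r + 1) := by
  induction k with
  | zero => simpa using I.card_eq_sum_sig μ
  | succ k ih =>
    rw [sum_range_succ, ih (by omega), if_neg k.succ_ne_zero,
      show n - k = n - (k + 1) + 1 by omega, sum_range_succ,
      show n + 1 - (k + 1) = n - (k + 1) + 1 by omega]
    ring

theorem FairMatching.paretoOptimal (hμ : I.FairMatching μ) : I.ParetoOptimal μ := by
  refine hμ.1.paretoOptimal_of_sig_eq fun ν hν hle r hr => ?_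
  have heq := (hμ.2 ν hν).eq_of_sum_le (fun j hj => ?_) (n - r) (by omega)
  · simpa [show n - r ≠ 0 by omega, show n + 1 - (n - r) = r + 1 by omega] using heq
  · cases j with
    | zero => simp
    | succ k =>
      rw [sum_range_succ_card_neg_sig I μ (by omega), sum_range_succ_card_neg_sig I ν (by omega)]
      exact hle (n - k)

end OSMInstance

theorem SatisfiesProp.paretoOptimal {n : ℕ} {X : MatchProp} {I : OSMInstance n}
    {μ : Finset (Fin n × Fin n)} (hμ : SatisfiesProp X I μ) : I.ParetoOptimal μ :=
  match X with
  | .po => hμ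
  | .rm => OSMInstance.RankMaximal.paretoOptimal hμ
  | .mcrm => OSMInstance.MaxCardRankMaximal.paretoOptimal hμ
  | .fair => OSMInstance.FairMatching.paretoOptimal hμ

namespace OSMInstance

variable {n : ℕ} {I : OSMInstance n} {μ ν : Finset (Fin n × Fin n)} {v : Fin n → Fin n → ℝ}
  {i j h h' : Fin n}

/-! ### Reassignments and favourite objects -/

/-- The edge set in which each agent `i ∈ P` gives up its allocation in `μ` for `t i`. -/
noncomputable def reassign (μ : Finset (Fin n × Fin n)) (P : Finset (Fin n)) (t : Fin n → Fin n) :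
    Finset (Fin n × Fin n) :=
  (μ.filter fun e => e.1 ∉ P) ∪ P.image fun i => (i, t i)

section Reassign

variable {P : Finset (Fin n)} {t : Fin n → Fin n}

theorem mem_reassign : (i, h) ∈ reassign μ P t ↔ (i, h) ∈ μ ∧ i ∉ P ∨ i ∈ P ∧ t i = h := by
  simp only [reassign, mem_union, mem_filter, mem_image, Prod.mk.injEq]
  grind

theorem IsMatching.reassign (hμ : I.IsMatching μ) (hacc : ∀ i ∈ P, t i ∈ I.accept i)
    (hinj : Set.InjOn t P) (howner : ∀ i, ∀ j ∈ P, (i, t j) ∈ μ → i ∈ P) :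
    I.IsMatching (reassign μ P t) := by
  simp only [isMatching_iff, mem_reassign]
  refine ⟨?_, ?_, ?_⟩
  · rintro i h (⟨hh, -⟩ | ⟨hi, rfl⟩)
    exacts [hμ.mem_accept hh, hacc i hi]
  · rintro i h h' (⟨hh, hi⟩ | ⟨hi, rfl⟩) (⟨hh', hi'⟩ | ⟨hi', rfl⟩)
    exacts [hμ.object_unique hh hh', absurd hi' hi, absurd hi hi', rfl]
  · rintro i j h (⟨hh, hi⟩ | ⟨hi, rfl⟩) (⟨hh', hj⟩ | ⟨hj, hij⟩)
    · exact hμ.agent_unique hh hh'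
    · exact absurd (howner i j hj (hij ▸ hh)) hi
    · exact absurd (howner j i hi hh') hj
    · exact hinj hi hj hij.symm

theorem ParetoOptimal.exists_not_strictPref_of_reassign (hμ : I.ParetoOptimal μ)
    (hP : P.Nonempty) (hacc : ∀ i ∈ P, t i ∈ I.accept i) (hinj : Set.InjOn t P)
    (howner : ∀ i, ∀ j ∈ P, (i, t j) ∈ μ → i ∈ P) :
    ∃ i ∈ P, ∃ h, (i, h) ∈ μ ∧ ¬ I.strictPref i (t i) h := by
  by_contra! hs
  obtain ⟨i₀, hi₀⟩ := hP
  refine hμ.2 ⟨reassign μ P t, hμ.1.reassign hacc hinj howner,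
    fun i => weakImprove_of_forall fun h hh => ?_, i₀,
    strictImprove_of_forall (mem_reassign.2 (Or.inr ⟨hi₀, rfl⟩)) (hs i₀ hi₀)⟩
  by_cases hi : i ∈ P
  · exact ⟨t i, mem_reassign.2 (Or.inr ⟨hi, rfl⟩), (hs i hi h hh).1⟩
  · exact ⟨h, mem_reassign.2 (Or.inl ⟨hh, hi⟩), I.pref_refl i h (hμ.1.mem_accept hh)⟩

end Reassign

theorem ParetoOptimal.exists_mem_of_forall_strictPref (hμ : I.ParetoOptimal μ)
    (hh : h ∈ I.accept i) (hs : ∀ h', (i, h') ∈ μ → I.strictPref i h h') : ∃ a, (a, h) ∈ μ := by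
  by_contra! hno
  obtain ⟨j, hj, h', hh', hns⟩ := hμ.exists_not_strictPref_of_reassign (P := {i})
    (t := fun _ => h) (singleton_nonempty i) (by simpa using hh) (by simp)
    (fun a _ _ ha => absurd ha (hno a))
  obtain rfl := mem_singleton.1 hj
  exact hns (hs h' hh')

theorem ParetoOptimal.exists_mem_forall_pref (hμ : I.ParetoOptimal μ) (hn : 0 < n) :
    ∃ i h, (i, h) ∈ μ ∧ ∀ h' ∈ I.accept i, I.pref i h h' := by
  by_contra! hno
  choose t ht htop using I.exists_forall_pref
  have hstrict : ∀ i h, (i, h) ∈ μ → I.strictPref i (t i) h := fun i h hh => by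
    refine ⟨htop i h (hμ.1.mem_accept hh), fun hp => ?_⟩
    obtain ⟨h', hh', hnp⟩ := hno i h hh
    exact hnp (I.pref_trans i h (t i) h' (hμ.1.mem_accept hh) (ht i) hh' hp (htop i h' hh'))
  choose owner howner using fun i => hμ.exists_mem_of_forall_strictPref (ht i) (hstrict i)
  have : Nonempty (Fin n) := ⟨⟨0, hn⟩⟩
  have hbij := Function.bijOn_periodicPts owner
  obtain ⟨i, -, h, hh, hns⟩ := hμ.exists_not_strictPref_of_reassign
    (P := (Function.periodicPts owner).toFinset) (t := t)
    (by simpa using periodicPts_nonempty owner) (fun i _ => ht i)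
    (fun i hi j hj hij => hbij.injOn (by simpa using hi) (by simpa using hj)
      (hμ.1.agent_unique (howner i) (hij ▸ howner j)))
    (fun i j hj hij => by
      rw [hμ.1.agent_unique hij (howner j)]
      simpa using hbij.mapsTo (by simpa using hj))
  exact hns (hstrict i h hh)

/-! ### The welfare of Pareto optimal matchings -/

theorem IsMatching.SW_le (hμ : I.IsMatching μ) (hv : I.Consistent v) : I.SW v μ ≤ n := by
  calc I.SW v μ ≤ ∑ _e ∈ μ, (1 : ℝ) := sum_le_sum fun e _ => (hv.1 e.1 e.2).2
    _ = μ.card := by simp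
    _ ≤ n := by exact_mod_cast hμ.card_le

theorem Consistent.le_SW (hv : I.Consistent v) (hh : (i, h) ∈ μ) : v i h ≤ I.SW v μ :=
  single_le_sum (f := fun e : Fin n × Fin n => v e.1 e.2) (fun e _ => (hv.1 e.1 e.2).1) hh

theorem ParetoOptimal.one_le_mul_SW (hμ : I.ParetoOptimal μ) (hn : 0 < n) (hv : I.Consistent v)
    (hu : I.UnitSum v) : 1 ≤ n * I.SW v μ := by
  obtain ⟨i, h, hh, htop⟩ := hμ.exists_mem_forall_pref hn
  calc (1 : ℝ) = ∑ h' ∈ I.accept i, v i h' := (hu i).symm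
    _ ≤ (I.accept i).card • v i h := sum_le_card_nsmul _ _ _ fun h' hh' =>
        (hv.2.2 i h h' (hμ.1.mem_accept hh) hh').1 (htop h' hh')
    _ = (I.accept i).card * v i h := nsmul_eq_mul _ _
    _ ≤ n * v i h := by
        gcongr
        · exact (hv.1 i h).1
        · simpa using card_le_univ (I.accept i)
    _ ≤ n * I.SW v μ := by
        gcongr
        exact hv.le_SW hh

theorem ParetoOptimal.SW_le_sq_mul_SW (hμ : I.ParetoOptimal μ) (hν : I.IsMatching ν)
    (hv : I.Consistent v) (hu : I.UnitSum v) : I.SW v ν ≤ n ^ 2 * I.SW v μ := by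
  rcases n.eq_zero_or_pos with rfl | hn
  · simpa using hν.SW_le hv
  · calc I.SW v ν ≤ n * 1 := by simpa using hν.SW_le hv
      _ ≤ n * (n * I.SW v μ) := by
          gcongr
          exact hμ.one_le_mul_SW hn hv hu
      _ = n ^ 2 * I.SW v μ := by ring

/-! ### Symmetries -/

/-- The edge set obtained from `μ` by handing the object of each agent `i` to `π i`. -/
def relabel (π : Equiv.Perm (Fin n)) (μ : Finset (Fin n × Fin n)) : Finset (Fin n × Fin n) :=
  μ.map (π.prodCongr (Equiv.refl _)).toEmbedding

/-- `π` is a symmetry of `I`: every agent `i` has the same acceptable set and preferences as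
`π i`. -/
structure IsSymmetry (I : OSMInstance n) (π : Equiv.Perm (Fin n)) : Prop where
  accept_eq : ∀ i, I.accept (π i) = I.accept i
  pref_eq : ∀ i, I.pref (π i) = I.pref i

section Relabel

variable {π : Equiv.Perm (Fin n)}

theorem mem_relabel : (i, h) ∈ relabel π μ ↔ (π.symm i, h) ∈ μ := by
  simp [relabel]

theorem card_relabel : (relabel π μ).card = μ.card :=
  card_map _

theorem SW_relabel : I.SW v (relabel π μ) = ∑ e ∈ μ, v (π e.1) e.2 := by
  simp [SW, relabel]

theorem relabel_symm_relabel : relabel π.symm (relabel π μ) = μ := by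
  ext ⟨i, h⟩
  simp [mem_relabel]

theorem unmatched_relabel : I.Unmatched (relabel π μ) i ↔ I.Unmatched μ (π.symm i) := by
  simp only [Unmatched, mem_relabel]

namespace IsSymmetry

theorem symm (hπ : I.IsSymmetry π) : I.IsSymmetry π.symm where
  accept_eq i := by simpa using (hπ.accept_eq (π.symm i)).symm
  pref_eq i := by simpa using (hπ.pref_eq (π.symm i)).symm

theorem isMatching_relabel (hπ : I.IsSymmetry π) (hμ : I.IsMatching μ) :
    I.IsMatching (relabel π μ) := by
  simp only [isMatching_iff, mem_relabel]
  refine ⟨fun i h hh => ?_, fun i h h' => hμ.object_unique, fun i j h hi hj => ?_⟩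
  · exact hπ.symm.accept_eq i ▸ hμ.mem_accept hh
  · exact π.symm.injective (hμ.agent_unique hi hj)

theorem edgeRank_eq (hπ : I.IsSymmetry π) (i h : Fin n) :
    I.edgeRank (π i, h) = I.edgeRank (i, h) := by
  unfold edgeRank
  congr 2
  ext h'
  rw [mem_filter, mem_filter]
  simp only [strictPref, hπ.accept_eq, hπ.pref_eq]

theorem sig_relabel (hπ : I.IsSymmetry π) (r : ℕ) : I.sig (relabel π μ) r = I.sig μ r := by
  unfold sig relabel
  rw [filter_map, card_map]
  congr 3
  ext ⟨i, h⟩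
  simp [hπ.edgeRank_eq]

theorem weakImprove_relabel (hπ : I.IsSymmetry π) :
    I.WeakImprove (relabel π ν) (relabel π μ) i ↔ I.WeakImprove ν μ (π.symm i) := by
  simp only [WeakImprove, unmatched_relabel, mem_relabel, hπ.symm.pref_eq]

theorem strictImprove_relabel (hπ : I.IsSymmetry π) :
    I.StrictImprove (relabel π ν) (relabel π μ) i ↔ I.StrictImprove ν μ (π.symm i) := by
  simp only [StrictImprove, unmatched_relabel, mem_relabel, strictPref, hπ.symm.pref_eq]

theorem paretoOptimal_relabel (hπ : I.IsSymmetry π) (hμ : I.ParetoOptimal μ) :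
    I.ParetoOptimal (relabel π μ) := by
  refine ⟨hπ.isMatching_relabel hμ.1, ?_⟩
  rintro ⟨ν, hν, hw, i, hs⟩
  rw [← relabel_symm_relabel (π := π) (μ := μ)] at hμ
  refine hμ.2 ⟨relabel π.symm ν, hπ.symm.isMatching_relabel hν,
    fun j => hπ.symm.weakImprove_relabel.2 (hw _), π.symm i, hπ.symm.strictImprove_relabel.2 ?_⟩
  simpa using hs

theorem satisfiesProp_relabel (hπ : I.IsSymmetry π) {X : MatchProp} (hμ : SatisfiesProp X I μ) :
    SatisfiesProp X I (relabel π μ) := by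
  cases X with
  | po => exact hπ.paretoOptimal_relabel hμ
  | rm =>
    refine ⟨hπ.isMatching_relabel hμ.1, ?_⟩
    simpa only [hπ.sig_relabel] using hμ.2
  | mcrm | fair =>
    refine ⟨hπ.isMatching_relabel hμ.1, ?_⟩
    simpa only [hπ.sig_relabel, card_relabel] using hμ.2

end IsSymmetry

end Relabel

/-! ### Instances given by scores -/

section Score

variable {α : Type*} [LinearOrder α] [OrderBot α] {s : Fin n → Fin n → α}

/-- The instance in which agent `i` ranks the objects `j` by decreasing score `s i j`, the score `⊥`
meaning that the object is unacceptable. -/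
noncomputable def ofScore (s : Fin n → Fin n → α) (hs : ∀ i, ∃ j, s i j ≠ ⊥) : OSMInstance n where
  accept i := univ.filter fun j => s i j ≠ ⊥
  accept_nonempty i := (hs i).imp fun _ hj => mem_filter.2 ⟨mem_univ _, hj⟩
  pref i h h' := s i h' ≤ s i h
  pref_refl _ _ _ := le_rfl
  pref_trans _ _ _ _ _ _ _ h₁ h₂ := h₂.trans h₁
  pref_total _ _ _ _ _ := le_total _ _

variable {hs : ∀ i, ∃ j, s i j ≠ ⊥}

theorem mem_accept_ofScore : h ∈ (ofScore s hs).accept i ↔ s i h ≠ ⊥ := by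
  simp [ofScore]

theorem strictPref_ofScore : (ofScore s hs).strictPref i h h' ↔ s i h' < s i h :=
  lt_iff_le_not_ge.symm

theorem isSymmetry_ofScore {π : Equiv.Perm (Fin n)} (hπ : ∀ i, s (π i) = s i) :
    (ofScore s hs).IsSymmetry π where
  accept_eq i := by simp only [ofScore, hπ]
  pref_eq i := by simp only [ofScore, hπ]

variable {φ : Fin n → α → ℝ}

theorem consistent_ofScore (hbot : ∀ i, φ i ⊥ = 0) (hnonneg : ∀ i a, 0 ≤ φ i a)
    (hmono : ∀ i, StrictMonoOn (φ i) {⊥}ᶜ) (hsum : ∀ i, ∑ j, φ i (s i j) = 1) :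
    (ofScore s hs).Consistent fun i j => φ i (s i j) := by
  refine ⟨fun i j => ⟨hnonneg i _, ?_⟩, fun i j hj => ?_, fun i h h' hh hh' => ?_⟩
  · rw [← hsum i]
    exact single_le_sum (f := fun j => φ i (s i j)) (fun j _ => hnonneg i _) (mem_univ j)
  · rw [mem_accept_ofScore, not_not] at hj
    simp only [hj, hbot]
  · exact ((hmono i).le_iff_le (mem_accept_ofScore.1 hh') (mem_accept_ofScore.1 hh)).symm

theorem unitSum_ofScore (hbot : ∀ i, φ i ⊥ = 0) (hsum : ∀ i, ∑ j, φ i (s i j) = 1) :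
    (ofScore s hs).UnitSum fun i j => φ i (s i j) := by
  intro i
  rw [← hsum i]
  refine sum_subset (subset_univ _) fun j _ hj => ?_
  rw [mem_accept_ofScore, not_not] at hj
  simp only [hj, hbot]

/-- The score of the object that agent `i` holds in `μ`, or `⊥` if `i` is unmatched. -/
def receivedScore (s : Fin n → Fin n → α) (μ : Finset (Fin n × Fin n)) (i : Fin n) : α :=
  (univ.filter fun j => (i, j) ∈ μ).sup (s i)

theorem IsMatching.receivedScore_eq (hμ : I.IsMatching μ) (hh : (i, h) ∈ μ) :
    receivedScore s μ i = s i h := by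
  have : (univ.filter fun j => (i, j) ∈ μ) = {h} := by
    ext j
    simpa using ⟨fun hj => hμ.object_unique hj hh, fun hj => hj ▸ hh⟩
  rw [receivedScore, this, sup_singleton]

theorem receivedScore_le {a : α} (ha : ∀ j, (i, j) ∈ μ → s i j ≤ a) :
    receivedScore s μ i ≤ a :=
  Finset.sup_le fun j hj => ha j (mem_filter.1 hj).2

end Score

end OSMInstance

open OSMInstance

/-! ### The hard instance -/

section HardInstance

variable {n : ℕ} {μ : Finset (Fin n × Fin n)} {i j a o : Fin n}

/-- The other agent of the pair `{2 k, 2 k + 1}` to which `i` belongs, or `i` itself if `i` is the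
last of an odd number of agents. -/
def twin (i : Fin n) : Fin n :=
  if h : 4 * ((i : ℕ) / 2) + 1 - i < n then ⟨4 * ((i : ℕ) / 2) + 1 - i, h⟩ else i

theorem twin_val (i : Fin n) : (twin i : ℕ) =
    if 4 * ((i : ℕ) / 2) + 1 - i < n then 4 * ((i : ℕ) / 2) + 1 - i else i := by
  unfold twin
  split_ifs <;> rfl

theorem twin_div_two (i : Fin n) : (twin i : ℕ) / 2 = (i : ℕ) / 2 := by
  rw [twin_val]
  split_ifs <;> omega

theorem twin_involutive : Function.Involutive (twin : Fin n → Fin n) := fun i => by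
  ext
  rw [twin_val, twin_div_two, twin_val]
  split_ifs <;> omega

theorem twin_ne (hi : (i : ℕ) / 2 < n / 2) : twin i ≠ i := by
  rw [Ne, Fin.ext_iff, twin_val]
  split_ifs <;> omega

/-- The permutation exchanging all twins. -/
def twinPerm (n : ℕ) : Equiv.Perm (Fin n) :=
  twin_involutive.toPerm

/-- How much agent `i` of the hard instance likes object `j`: object `0` is everybody's
favourite, object `i / 2 + 1` is the second choice of `i` and its twin, the objects from
`n / 2 + 2` on are common last resorts, and all other objects (score `0`) are unacceptable. -/
def hardScore (i j : Fin n) : Fin 4 :=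
  if (j : ℕ) = 0 then 3 else if (j : ℕ) = i / 2 + 1 then 2 else if n / 2 + 2 ≤ (j : ℕ) then 1 else 0

theorem hardScore_eq_three : hardScore i j = 3 ↔ (j : ℕ) = 0 := by
  unfold hardScore
  split_ifs <;> simp_all

theorem hardScore_eq_two : hardScore i j = 2 ↔ (j : ℕ) = i / 2 + 1 := by
  unfold hardScore
  split_ifs <;> simp_all

theorem hardScore_twin (i : Fin n) : hardScore (twin i) = hardScore i := by
  funext j
  simp only [hardScore, twin_div_two]

/-- The instance with the preferences described at `hardScore`. -/
noncomputable def hardInstance (n : ℕ) : OSMInstance n :=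
  ofScore hardScore fun i => ⟨⟨0, i.pos⟩, by simp [hardScore, bot_eq_zero]⟩

theorem mem_accept_hardInstance : j ∈ (hardInstance n).accept i ↔ hardScore i j ≠ 0 :=
  mem_accept_ofScore

theorem isSymmetry_hardInstance (n : ℕ) : (hardInstance n).IsSymmetry (twinPerm n) :=
  isSymmetry_ofScore hardScore_twin

/-- The number of common last resorts in the hard instance. The subtraction truncates
for `n ≤ 2`. -/
def resortCount (n : ℕ) : ℕ := n - (n / 2 + 2)

theorem card_filter_resort (n : ℕ) :
    (univ.filter fun j : Fin n => n / 2 + 2 ≤ (j : ℕ)).card = resortCount n := by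
  have h := card_filter_add_card_filter_not (s := (univ : Finset (Fin n)))
    (fun j : Fin n => (j : ℕ) < n / 2 + 2)
  simp only [not_lt, Fin.card_filter_val_lt, card_univ, Fintype.card_fin] at h
  unfold resortCount
  omega

theorem sum_hardScore (hn : 2 ≤ n) {φ : Fin 4 → ℝ} (hφ : φ 0 = 0) (i : Fin n) :
    ∑ j, φ (hardScore i j) = φ 3 + φ 2 + resortCount n * φ 1 := by
  have hi := i.isLt
  let favourite : Fin n := ⟨0, by omega⟩
  let second : Fin n := ⟨i / 2 + 1, by omega⟩
  have hpt : ∀ j : Fin n, φ (hardScore i j) = (if j = favourite then φ 3 else 0) +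
      (if j = second then φ 2 else 0) + (if n / 2 + 2 ≤ (j : ℕ) then φ 1 else 0) := by
    intro j
    simp only [hardScore, favourite, second, Fin.ext_iff]
    split_ifs <;> first | omega | simp [hφ]
  simp only [hpt, sum_add_distrib, sum_ite_eq', mem_univ, if_true]
  rw [← sum_filter, sum_const, card_filter_resort, nsmul_eq_mul]

theorem exists_mem_second_choice (hμ : (hardInstance n).ParetoOptimal μ) (ho : hardScore i o = 2)
    (hi : ∀ j, (i, j) ∈ μ → hardScore i j ≠ 3) : ∃ a, (a, o) ∈ μ ∧ (a : ℕ) / 2 = i / 2 := by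
  have hval := hardScore_eq_two.1 ho
  obtain ⟨a, ha⟩ : ∃ a, (a, o) ∈ μ := by
    by_contra! hno
    have hlt : ∀ j, (i, j) ∈ μ → hardScore i j < hardScore i o := fun j hj => by
      have hj₂ : hardScore i j ≠ 2 := fun h =>
        hno i (Fin.ext ((hardScore_eq_two.1 h).trans hval.symm) ▸ hj)
      have hj₃ := hi j hj
      omega
    obtain ⟨a, ha⟩ := hμ.exists_mem_of_forall_strictPref
      (mem_accept_hardInstance.2 (by simp [ho])) fun j hj => strictPref_ofScore.2 (hlt j hj)
    exact hno a ha
  have hacc : hardScore a o ≠ 0 := mem_accept_hardInstance.1 (hμ.1.mem_accept ha)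
  refine ⟨a, ha, ?_⟩
  have := i.isLt
  unfold hardScore at hacc
  split_ifs at hacc <;> omega

/-! ### The adversarial valuations -/

/-- `adversaryValue n r s` is the value the adversary gives to an object of score `s` for an agent
that receives an object of score `r`: the holder of the favourite gets nearly uniform values, the
holder of a second choice gets nearly all value from the favourite, and all other agents share their
value between their first two choices. -/
noncomputable def adversaryValue (n : ℕ) : Fin 4 → Fin 4 → ℝ :=
  ![![0, 0, 1 / 3, 2 / 3],
    ![0, 0, 1 / 3, 2 / 3],
    ![0, 0, 1 / (n : ℝ) ^ 2, 1 - 1 / (n : ℝ) ^ 2],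
    ![0, 1 / ((resortCount n : ℝ) + 5), 2 / ((resortCount n : ℝ) + 5),
      3 / ((resortCount n : ℝ) + 5)]]

theorem adversaryValue_zero (n : ℕ) (r : Fin 4) : adversaryValue n r 0 = 0 := by
  fin_cases r <;> rfl

theorem adversaryValue_one_nonneg (n : ℕ) : ∀ r : Fin 4, 0 ≤ adversaryValue n r 1
  | 0 | 1 | 2 => le_rfl
  | 3 => show 0 ≤ 1 / ((resortCount n : ℝ) + 5) by positivity

theorem adversaryValue_one_lt_two (hn : 0 < n) : ∀ r : Fin 4,
    adversaryValue n r 1 < adversaryValue n r 2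
  | 0 | 1 => show (0 : ℝ) < 1 / 3 by norm_num
  | 2 => show 0 < 1 / (n : ℝ) ^ 2 by positivity
  | 3 => show 1 / ((resortCount n : ℝ) + 5) < 2 / ((resortCount n : ℝ) + 5) by gcongr; norm_num

theorem adversaryValue_two_lt_three (hn : 2 ≤ n) : ∀ r : Fin 4,
    adversaryValue n r 2 < adversaryValue n r 3
  | 0 | 1 => show (1 / 3 : ℝ) < 2 / 3 by norm_num
  | 2 => show 1 / (n : ℝ) ^ 2 < 1 - 1 / (n : ℝ) ^ 2 by
    have h : 1 / (n : ℝ) ^ 2 ≤ 1 / 2 ^ 2 := by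
      gcongr
      exact_mod_cast hn
    linarith
  | 3 => show 2 / ((resortCount n : ℝ) + 5) < 3 / ((resortCount n : ℝ) + 5) by gcongr; norm_num

theorem strictMonoOn_adversaryValue (hn : 2 ≤ n) (r : Fin 4) :
    StrictMonoOn (adversaryValue n r) {⊥}ᶜ := by
  have h₁₂ := adversaryValue_one_lt_two (two_pos.trans_le hn) r
  have h₂₃ := adversaryValue_two_lt_three hn r
  have h₁₃ := h₁₂.trans h₂₃
  intro s hs s' hs' hlt
  fin_cases s <;> fin_cases s' <;> simp_all [bot_eq_zero]

theorem adversaryValue_nonneg (hn : 2 ≤ n) (r s : Fin 4) : 0 ≤ adversaryValue n r s := by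
  rcases eq_or_ne s 0 with rfl | hs
  · exact (adversaryValue_zero n r).ge
  · exact (adversaryValue_one_nonneg n r).trans
      ((strictMonoOn_adversaryValue hn r).monotoneOn (by decide) hs (by omega))

theorem adversaryValue_sum_eq_one (n : ℕ) (r : Fin 4) :
    adversaryValue n r 3 + adversaryValue n r 2 + resortCount n * adversaryValue n r 1 = 1 := by
  fin_cases r <;> simp [adversaryValue]
  · norm_num
  · norm_num
  · field_simp
    ring

theorem adversaryValue_self_le (n : ℕ) (s : Fin 4) : adversaryValue n s s ≤
    (if s = 3 then 3 / ((resortCount n : ℝ) + 5) else 0) + 1 / (n : ℝ) ^ 2 := by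
  fin_cases s <;> simp [adversaryValue]

/-- The valuation profile with which the adversary answers the matching `μ` of the hard
instance. -/
noncomputable def adversaryProfile (μ : Finset (Fin n × Fin n)) (i j : Fin n) : ℝ :=
  adversaryValue n (receivedScore hardScore μ i) (hardScore i j)

theorem sum_adversaryProfile (hn : 2 ≤ n) (μ : Finset (Fin n × Fin n)) (i : Fin n) :
    ∑ j, adversaryProfile μ i j = 1 :=
  (sum_hardScore hn (adversaryValue_zero n _) i).trans (adversaryValue_sum_eq_one n _)

theorem consistent_adversaryProfile (hn : 2 ≤ n) (μ : Finset (Fin n × Fin n)) :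
    (hardInstance n).Consistent (adversaryProfile μ) :=
  consistent_ofScore (fun _ => adversaryValue_zero n _) (fun _ => adversaryValue_nonneg hn _)
    (fun _ => strictMonoOn_adversaryValue hn _) (sum_adversaryProfile hn μ)

theorem unitSum_adversaryProfile (hn : 2 ≤ n) (μ : Finset (Fin n × Fin n)) :
    (hardInstance n).UnitSum (adversaryProfile μ) :=
  unitSum_ofScore (fun _ => adversaryValue_zero n _) (sum_adversaryProfile hn μ)

theorem SW_adversaryProfile_le (hn : 0 < n) (hμ : (hardInstance n).IsMatching μ) :
    (hardInstance n).SW (adversaryProfile μ) μ ≤ 7 / n := by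
  have hresort : (n : ℝ) / 2 ≤ (resortCount n : ℝ) + 5 := by
    have : n ≤ 2 * (resortCount n + 5) := by
      unfold resortCount
      omega
    rify at this
    linarith
  have hfavourite : (μ.filter fun e => hardScore e.1 e.2 = 3).card ≤ 1 := by
    simp only [card_le_one, mem_filter, hardScore_eq_three]
    exact fun e he e' he' => hμ.2.2 e he.1 e' he'.1 (Fin.ext (he.2.trans he'.2.symm))
  calc (hardInstance n).SW (adversaryProfile μ) μ
      ≤ ∑ e ∈ μ, ((if hardScore e.1 e.2 = 3 then 3 / ((resortCount n : ℝ) + 5) else 0)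
          + 1 / (n : ℝ) ^ 2) := sum_le_sum fun e he => by
        rw [adversaryProfile, hμ.receivedScore_eq he]
        exact adversaryValue_self_le n _
    _ = (μ.filter fun e => hardScore e.1 e.2 = 3).card * (3 / ((resortCount n : ℝ) + 5))
          + μ.card * (1 / (n : ℝ) ^ 2) := by
        rw [sum_add_distrib, ← sum_filter, sum_const, sum_const, nsmul_eq_mul, nsmul_eq_mul]
    _ ≤ 1 * (3 / ((n : ℝ) / 2)) + n * (1 / (n : ℝ) ^ 2) := by
        gcongr
        · exact_mod_cast hfavourite
        · exact hμ.card_le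
    _ = 7 / n := by
        field_simp
        norm_num

theorem adversaryProfile_twin (hμ : (hardInstance n).IsMatching μ) (ha : (a, o) ∈ μ)
    (hne : twin a ≠ a) (ho : hardScore a o = 2)
    (hfav : ∀ j, (twin a, j) ∈ μ → hardScore (twin a) j ≠ 3) :
    adversaryProfile μ (twin a) o = 1 / 3 := by
  have hreceived : receivedScore hardScore μ (twin a) ≤ 1 := receivedScore_le fun j hj => by
    have hj₃ := hfav j hj
    have hj₂ : hardScore (twin a) j ≠ 2 := fun hj₂ => by
      rw [hardScore_twin, hardScore_eq_two, ← hardScore_eq_two.1 ho] at hj₂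
      exact hne (hμ.agent_unique (Fin.ext hj₂ ▸ hj) ha)
    omega
  rw [adversaryProfile, hardScore_twin, ho]
  obtain h | h : receivedScore hardScore μ (twin a) = 0 ∨ receivedScore hardScore μ (twin a) = 1 :=
    by omega
  all_goals simp [h, adversaryValue]

theorem exists_mem_adversaryProfile_twin (hμ : (hardInstance n).ParetoOptimal μ) {k : ℕ}
    (hk : k < n / 2) (hfav : ∀ i j : Fin n, (i, j) ∈ μ → (i : ℕ) / 2 = k → hardScore i j ≠ 3) :
    ∃ a o : Fin n, (a, o) ∈ μ ∧ (o : ℕ) = k + 1 ∧ adversaryProfile μ (twin a) o = 1 / 3 := by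
  let i : Fin n := ⟨2 * k, by omega⟩
  let o : Fin n := ⟨k + 1, by omega⟩
  have hi : (i : ℕ) / 2 = k := by simp [i]
  obtain ⟨a, ha, hai⟩ := exists_mem_second_choice hμ (i := i) (o := o)
    (hardScore_eq_two.2 (by simp [i, o])) fun j hj => hfav i j hj hi
  have hak : (a : ℕ) / 2 = k := hai.trans hi
  exact ⟨a, o, ha, rfl, adversaryProfile_twin hμ.1 ha (twin_ne (hak ▸ hk))
    (hardScore_eq_two.2 (by simp [o, hak])) fun j hj => hfav _ j hj ((twin_div_two a).trans hak)⟩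

theorem exists_pair_of_favourite (hμ : (hardInstance n).IsMatching μ) :
    ∃ b : ℕ, ∀ i j : Fin n, (i, j) ∈ μ → hardScore i j = 3 → (i : ℕ) / 2 = b := by
  by_cases hfav : ∃ i j : Fin n, (i, j) ∈ μ ∧ hardScore i j = 3
  · obtain ⟨i, j, hij, hj⟩ := hfav
    refine ⟨i / 2, fun i' j' hij' hj' => ?_⟩
    rw [hardScore_eq_three] at hj hj'
    obtain rfl : j = j' := Fin.ext (hj.trans hj'.symm)
    rw [hμ.agent_unique hij hij']
  · push Not at hfav
    exact ⟨0, fun i j hij hj => absurd hj (hfav i j hij)⟩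

theorem le_card_filter_adversaryProfile_twin (hμ : (hardInstance n).ParetoOptimal μ) :
    n / 2 - 1 ≤ (μ.filter fun e => adversaryProfile μ (twin e.1) e.2 = 1 / 3).card := by
  obtain ⟨b, hb⟩ := exists_pair_of_favourite hμ.1
  calc n / 2 - 1 = (range (n / 2)).card - 1 := by rw [card_range]
    _ ≤ ((range (n / 2)).erase b).card := pred_card_le_card_erase
    _ ≤ _ := card_le_card_of_surjOn (fun e => (e.2 : ℕ) - 1) fun k hk => ?_
  obtain ⟨hkb, hk⟩ := mem_erase.1 hk
  obtain ⟨a, o, ha, ho, hval⟩ := exists_mem_adversaryProfile_twin hμ (mem_range.1 hk)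
    fun i j hij hik hj => hkb (hik ▸ hb i j hij hj)
  exact ⟨(a, o), mem_filter.2 ⟨ha, hval⟩, by simp [ho]⟩

theorem le_SW_relabel_twinPerm (hn : 2 ≤ n) (hμ : (hardInstance n).ParetoOptimal μ) :
    ((n / 2 - 1 : ℕ) : ℝ) * (1 / 3) ≤
      (hardInstance n).SW (adversaryProfile μ) (relabel (twinPerm n) μ) := by
  set good := μ.filter fun e => adversaryProfile μ (twin e.1) e.2 = 1 / 3
  calc ((n / 2 - 1 : ℕ) : ℝ) * (1 / 3) ≤ good.card * (1 / 3) := by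
        gcongr
        exact le_card_filter_adversaryProfile_twin hμ
    _ = ∑ e ∈ good, adversaryProfile μ (twin e.1) e.2 := by
        rw [sum_congr rfl fun e he => (mem_filter.1 he).2, sum_const, nsmul_eq_mul]
    _ ≤ ∑ e ∈ μ, adversaryProfile μ (twin e.1) e.2 := sum_le_sum_of_subset_of_nonneg
        (filter_subset _ _) fun e _ _ => ((consistent_adversaryProfile hn μ).1 _ _).1
    _ = (hardInstance n).SW (adversaryProfile μ) (relabel (twinPerm n) μ) :=
        (SW_relabel (π := twinPerm n)).symm

theorem sq_mul_SW_le_SW_relabel_twinPerm (hn : 8 ≤ n) (hμ : (hardInstance n).ParetoOptimal μ) :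
    1 / 84 * (n : ℝ) ^ 2 * (hardInstance n).SW (adversaryProfile μ) μ ≤
      (hardInstance n).SW (adversaryProfile μ) (relabel (twinPerm n) μ) := by
  have hpairs : (n : ℝ) ≤ 4 * ((n / 2 - 1 : ℕ) : ℝ) := by
    exact_mod_cast (by omega : n ≤ 4 * (n / 2 - 1))
  calc 1 / 84 * (n : ℝ) ^ 2 * (hardInstance n).SW (adversaryProfile μ) μ
      ≤ 1 / 84 * (n : ℝ) ^ 2 * (7 / n) := by
        gcongr
        exact SW_adversaryProfile_le (by omega) hμ.1
    _ = (n : ℝ) / 12 := by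
        field_simp
        norm_num
    _ ≤ ((n / 2 - 1 : ℕ) : ℝ) * (1 / 3) := by linarith
    _ ≤ _ := le_SW_relabel_twinPerm (by omega) hμ

end HardInstance

theorem ordinal_unitSum_bounds_general
    {P : ∀ n : ℕ, OSMInstance n → Finset (Fin n × Fin n) → Prop}
    (hpo : ∀ {n I μ}, P n I μ → I.ParetoOptimal μ)
    (hrelabel : ∀ {n I μ π}, I.IsSymmetry π → P n I μ → P n I (relabel π μ)) :
    (∃ c : ℝ, 0 < c ∧ ∃ n₀ : ℕ, ∀ n : ℕ, n₀ ≤ n → ∃ I : OSMInstance n, ∀ μ, P n I μ →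
      ∃ v : Fin n → Fin n → ℝ, I.Consistent v ∧ I.UnitSum v ∧
        ∃ μ', P n I μ' ∧ c * (n : ℝ) ^ 2 * I.SW v μ ≤ I.SW v μ') ∧
    (∀ n : ℕ, ∀ I : OSMInstance n, ∀ μ, P n I μ →
      ∀ v : Fin n → Fin n → ℝ, I.Consistent v → I.UnitSum v →
      ∀ μ', I.IsMatching μ' → I.SW v μ' ≤ (n : ℝ) ^ 2 * I.SW v μ) := by
  refine ⟨⟨1 / 84, by norm_num, 8, fun n hn => ⟨hardInstance n, fun μ hμ => ?_⟩⟩,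
    fun n I μ hμ v hv hu μ' hμ' => (hpo hμ).SW_le_sq_mul_SW hμ' hv hu⟩
  exact ⟨adversaryProfile μ, consistent_adversaryProfile (by omega) μ,
    unitSum_adversaryProfile (by omega) μ, relabel (twinPerm n) μ,
    hrelabel (isSymmetry_hardInstance n) hμ, sq_mul_SW_le_SW_relabel_twinPerm hn (hpo hμ)⟩

/-- (i) every deterministic ordinal algorithm that always outputs a
matching satisfying `X` loses a factor of `Ω(n²)` in welfare on some instance with
unit-sum valuations, and (ii) this is asymptotically tight: any matching satisfying `X`
achieves an `n²`-approximation to the optimal welfare among matchings satisfying `X`. -/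
theorem ordinal_unitSum_bounds (X : MatchProp) :
    (∃ c : ℝ, 0 < c ∧ ∃ n₀ : ℕ, ∀ n : ℕ, n₀ ≤ n →
      ∀ f : OSMInstance n → Finset (Fin n × Fin n),
        (∀ I : OSMInstance n, SatisfiesProp X I (f I)) →
        ∃ I : OSMInstance n, ∃ v : Fin n → Fin n → ℝ,
          I.Consistent v ∧ I.UnitSum v ∧
          ∃ μ', SatisfiesProp X I μ' ∧
            c * (n : ℝ) ^ 2 * I.SW v (f I) ≤ I.SW v μ') ∧
    (∀ n : ℕ, 2 ≤ n → ∀ I : OSMInstance n,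
      ∀ μ, SatisfiesProp X I μ →
      ∀ v : Fin n → Fin n → ℝ, I.Consistent v → I.UnitSum v →
      ∀ μ', SatisfiesProp X I μ' →
        I.SW v μ' ≤ (n : ℝ) ^ 2 * I.SW v μ) := by
  obtain ⟨⟨c, hc, n₀, hlower⟩, hupper⟩ := ordinal_unitSum_bounds_general
    (P := fun _ => SatisfiesProp X) (·.paretoOptimal)
    fun hπ hμ => hπ.satisfiesProp_relabel hμ
  exact ⟨⟨c, hc, n₀, fun n hn f hf => (hlower n hn).imp fun I hI => hI (f I) (hf I)⟩,
    fun n _ I μ hμ v hv hu μ' hμ' => hupper n I μ hμ v hv hu μ' hμ'.paretoOptimal.1⟩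
end
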